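/- arXiv:2507.10037 — 2 statements merged into one kernel-verified Lean document; each statement's English description precedes it below -/
import Mathlib

section
/- Let c = 1/99. For any ε > 0 there exists n₀(ε) such that the following holds for all n ≥ n₀(ε): if G is a graph on n vertices that is ε-far from every disjoint union of cliques, then sp*(G) ≥ (1/2) n^(1+c). -/
-- The adjacency matrix of a simple graph, over `ℝ`.
open scoped Classical in
noncomputable def adjMat {V : Type*} (G : SimpleGraph V) : Matrix V V ℝ :=
  Matrix.of fun i j => if G.Adj i j then (1 : ℝ) else 0

-- `sp*(G)`: the SDP relaxation of the surplus.
noncomputable def spStar {V : Type*} [Fintype V] (G : SimpleGraph V) : ℝ :=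
  sSup {x : ℝ | ∃ M : Matrix V V ℝ, M.PosSemidef ∧ (∀ i, M i i ≤ 1) ∧
    x = (1 / 2) * ∑ i, ∑ j, (-(adjMat G)) i j * M i j}

-- A graph is a disjoint union of cliques iff every connected component is complete.
def IsUnionOfCliques {V : Type*} (G : SimpleGraph V) : Prop :=
  ∀ u v : V, G.Reachable u v → u ≠ v → G.Adj u v

-- Two graphs on `n` vertices are `ε`-close if one can add or delete at most `ε n ^ 2`
-- edges of `G` to obtain a graph isomorphic to `H`.
def EpsClose {n : ℕ} (ε : ℝ) (G H : SimpleGraph (Fin n)) : Prop :=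
  ∃ G' : SimpleGraph (Fin n), Nonempty (G' ≃g H) ∧
    ((symmDiff G.edgeSet G'.edgeSet).ncard : ℝ) ≤ ε * (n : ℝ) ^ 2

-- `G` is `ε`-far from every disjoint union of cliques.
def FarFromCliqueUnions {n : ℕ} (ε : ℝ) (G : SimpleGraph (Fin n)) : Prop :=
  ∀ H : SimpleGraph (Fin n), IsUnionOfCliques H → ¬ EpsClose ε G H

open Matrix in
lemma aux_spec {n : ℕ} (A : Matrix (Fin n) (Fin n) ℝ) (hA : A.IsHermitian) :
    ∃ (l : Fin n → ℝ) (U : Matrix (Fin n) (Fin n) ℝ), Uᵀ * U = 1 ∧ U * Uᵀ = 1 ∧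
      A = U * diagonal l * Uᵀ ∧ A.rank = (Finset.univ.filter (fun i => l i ≠ 0)).card := by
  classical
  refine ⟨hA.eigenvalues, hA.eigenvectorUnitary, ?_, ?_, ?_, ?_⟩
  · have := Unitary.coe_star_mul_self hA.eigenvectorUnitary
    rwa [star_eq_conjTranspose, conjTranspose_eq_transpose_of_trivial] at this
  · have := Unitary.coe_mul_star_self hA.eigenvectorUnitary
    rwa [Unitary.coe_star, star_eq_conjTranspose, conjTranspose_eq_transpose_of_trivial] at this
  · have := hA.spectral_theorem
    rw [Unitary.conjStarAlgAut_apply, star_eq_conjTranspose,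
      conjTranspose_eq_transpose_of_trivial] at this
    exact this
  · rw [hA.rank_eq_card_non_zero_eigs, Fintype.card_subtype]

open Matrix in
lemma aux_psd_pm {n : ℕ} (U : Matrix (Fin n) (Fin n) ℝ) (f : Fin n → ℝ) (hf : ∀ i, 0 ≤ f i) :
    (U * diagonal f * Uᵀ).PosSemidef := by
  have := (PosSemidef.diagonal (n := Fin n) (d := f) hf).mul_mul_conjTranspose_same U
  rwa [conjTranspose_eq_transpose_of_trivial] at this

open Matrix in
lemma aux_pm_apply {n : ℕ} (U : Matrix (Fin n) (Fin n) ℝ) (f : Fin n → ℝ) (i j : Fin n) :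
    (U * diagonal f * Uᵀ) i j = ∑ k, f k * U i k * U j k := by
  rw [mul_apply]
  refine Finset.sum_congr rfl fun k _ => ?_
  rw [mul_diagonal, transpose_apply]; ring

open Matrix in
lemma aux_pm_trace {n : ℕ} (U : Matrix (Fin n) (Fin n) ℝ) (hU : Uᵀ * U = 1) (f : Fin n → ℝ) :
    (U * diagonal f * Uᵀ).trace = ∑ i, f i := by
  rw [trace_mul_comm, ← mul_assoc, hU, one_mul, trace_diagonal]

open Matrix in
lemma aux_pm_frob {n : ℕ} (U : Matrix (Fin n) (Fin n) ℝ) (hU : Uᵀ * U = 1) (f : Fin n → ℝ) :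
    ∑ i, ∑ j, ((U * diagonal f * Uᵀ) i j) ^ 2 = ∑ i, f i ^ 2 := by
  have h1 : (U * diagonal f * Uᵀ) * (U * diagonal f * Uᵀ)ᵀ
      = U * diagonal (fun i => f i ^ 2) * Uᵀ := by
    have h0 : diagonal (fun i => f i ^ 2) = diagonal f * diagonal f := by
      rw [diagonal_mul_diagonal]; congr 1; ext i; ring
    rw [h0]
    simp only [transpose_mul, transpose_transpose, diagonal_transpose, mul_assoc]
    rw [← mul_assoc Uᵀ U, hU, one_mul]
  rw [← aux_pm_trace U hU (fun i => f i ^ 2), ← h1, trace]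
  refine Finset.sum_congr rfl fun i _ => ?_
  rw [diag_apply, mul_apply]
  refine Finset.sum_congr rfl fun k _ => ?_
  rw [transpose_apply]; ring

open Matrix in
lemma aux_trace_rank {n : ℕ} (Q C : Matrix (Fin n) (Fin n) ℝ) (c s : ℝ) (hc : 0 ≤ c)
    (hQ : Q.IsHermitian) (hC : C.PosSemidef) (h : (C + c • (1 : Matrix (Fin n) (Fin n) ℝ) - Q).PosSemidef)
    (hr : (Q.rank : ℝ) ≤ s) : Q.trace ≤ C.trace + c * s := by
  obtain ⟨μ, V, h1, h2, h3, h4⟩ := aux_spec Q hQ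
  have hd : ∀ a, μ a ≤ (Vᵀ * C * V) a a + c := by
    intro a
    have := (h.conjTranspose_mul_mul_same V).diag_nonneg (i := a)
    rw [conjTranspose_eq_transpose_of_trivial, mul_sub, sub_mul, mul_add, add_mul, Matrix.mul_smul,
      Matrix.smul_mul, mul_one, h1, h3] at this
    have e : Vᵀ * (V * diagonal μ * Vᵀ) * V = diagonal μ := by
      rw [← mul_assoc, ← mul_assoc, h1, one_mul, mul_assoc, h1, mul_one]
    rw [e] at this
    simp at this
    linarith
  have hd0 : ∀ a, 0 ≤ (Vᵀ * C * V) a a := by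
    intro a
    have := (hC.conjTranspose_mul_mul_same V).diag_nonneg (i := a)
    rwa [conjTranspose_eq_transpose_of_trivial] at this
  have ht : C.trace = ∑ a, (Vᵀ * C * V) a a := by
    have : (Vᵀ * C * V).trace = C.trace := by
      rw [trace_mul_comm, ← mul_assoc, h2, one_mul]
    rw [← this]; rfl
  have hq : Q.trace = ∑ a, μ a := by
    rw [h3]; exact aux_pm_trace V h1 μ
  rw [hq, ht]
  calc ∑ a, μ a = ∑ a ∈ Finset.univ.filter (fun i => μ i ≠ 0), μ a := by
        rw [Finset.sum_filter_ne_zero]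
    _ ≤ ∑ a ∈ Finset.univ.filter (fun i => μ i ≠ 0), ((Vᵀ * C * V) a a + c) :=
        Finset.sum_le_sum fun a _ => hd a
    _ = ∑ a ∈ Finset.univ.filter (fun i => μ i ≠ 0), (Vᵀ * C * V) a a + c * Q.rank := by
        rw [Finset.sum_add_distrib, Finset.sum_const, h4, nsmul_eq_mul]; ring
    _ ≤ _ := by
        gcongr
        · exact fun a _ _ => hd0 a
        · exact Finset.subset_univ _

/-- Sum of the values `≥ K`. -/
noncomputable def topSum {n : ℕ} (l : Fin n → ℝ) (K : ℝ) : ℝ :=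
  ∑ i, if K ≤ l i then l i else 0

noncomputable def topF {n : ℕ} (l : Fin n → ℝ) (K : ℝ) : Fin n → ℝ :=
  fun i => if K ≤ l i then l i else 0

open Matrix in
lemma aux_rank_had {n : ℕ} (U : Matrix (Fin n) (Fin n) ℝ) (f : Fin n → ℝ) (S : Finset (Fin n))
    (hf : ∀ i, i ∉ S → f i = 0) :
    ((U * diagonal f * Uᵀ) ⊙ (U * diagonal f * Uᵀ)).rank ≤ S.card ^ 2 := by
  have e : (U * diagonal f * Uᵀ) ⊙ (U * diagonal f * Uᵀ) =
      (Matrix.of fun (i : Fin n) (p : S × S) => f p.1 * f p.2 * U i p.1 * U i p.2) *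
      (Matrix.of fun (p : S × S) (j : Fin n) => U j p.1 * U j p.2) := by
    ext i j
    rw [hadamard_apply, aux_pm_apply, mul_apply, Fintype.sum_prod_type]
    have e1 : ∑ k, f k * U i k * U j k = ∑ k : S, f k * U i k * U j k := by
      rw [Finset.sum_coe_sort S (fun k => f k * U i k * U j k)]
      symm
      apply Finset.sum_subset (Finset.subset_univ _)
      intro x _ hx; rw [hf x hx]; ring
    rw [e1, Finset.sum_mul_sum]
    refine Finset.sum_congr rfl fun k _ => Finset.sum_congr rfl fun m _ => ?_
    simp only [of_apply]; ring
  rw [e]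
  refine (rank_mul_le_left _ _).trans ((rank_le_card_width _).trans ?_)
  simp [Fintype.card_prod, sq]

open Matrix in
lemma aux_growth {n : ℕ} (hn : 0 < n) (A U : Matrix (Fin n) (Fin n) ℝ) (l : Fin n → ℝ) (d : ℝ) (hd : 0 ≤ d)
    (h01 : ∀ i j, A i j = 0 ∨ A i j = 1) (hdiag : ∀ i, A i i = 0)
    (hU : Uᵀ * U = 1) (hU' : U * Uᵀ = 1) (hA : A = U * diagonal l * Uᵀ) (hl : ∀ i, -d ≤ l i)
    (K K' : ℝ) (hK : 0 < K) (hK' : 0 < K') :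
    topSum l K ^ 2 / n ≤ topSum l K' + (K' + d ^ 2) * (topSum l K / K) ^ 2 := by
  classical
  set P := U * diagonal (topF l K) * Uᵀ with hP
  set P' := U * diagonal (topF l K') * Uᵀ with hP'
  have one_eq : (1 : Matrix (Fin n) (Fin n) ℝ) = U * diagonal (fun _ => 1) * Uᵀ := by
    rw [diagonal_one, mul_one, hU']
  have lin : ∀ f g : Fin n → ℝ, U * diagonal f * Uᵀ + U * diagonal g * Uᵀ
      = U * diagonal (f + g) * Uᵀ := by
    intro f g
    rw [← add_mul, ← mul_add, diagonal_add]; rfl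
  have lin2 : ∀ f g : Fin n → ℝ, U * diagonal f * Uᵀ - U * diagonal g * Uᵀ
      = U * diagonal (f - g) * Uᵀ := by
    intro f g
    rw [← sub_mul, ← mul_sub, diagonal_sub]; rfl
  have lin3 : ∀ (c : ℝ) (f : Fin n → ℝ), c • (U * diagonal f * Uᵀ)
      = U * diagonal (c • f) * Uᵀ := by
    intro c f
    rw [diagonal_smul, Matrix.mul_smul, Matrix.smul_mul]
  have hf0 : ∀ k, 0 < k → ∀ i, 0 ≤ topF l k i := by
    intro k hk i; unfold topF; split_ifs <;> linarith
  have hPpsd : P.PosSemidef := aux_psd_pm U _ (hf0 K hK)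
  have hP'psd : P'.PosSemidef := aux_psd_pm U _ (hf0 K' hK')
  set B := A + d • (1 : Matrix (Fin n) (Fin n) ℝ) with hB
  have hB1 : B = U * diagonal (l + d • fun _ => 1) * Uᵀ := by
    rw [hB, hA]; nth_rewrite 1 [one_eq]; rw [lin3, lin]
  have hBP : (B - P).PosSemidef := by
    rw [hB1, hP, lin2]
    apply aux_psd_pm
    intro i
    have := hl i
    simp only [Pi.sub_apply, Pi.add_apply, Pi.smul_apply, smul_eq_mul, topF]
    split_ifs <;> linarith
  have hBpP : (B + P).PosSemidef := by
    have : B + P = (B - P) + P + P := by abel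
    rw [this]; exact (hBP.add hPpsd).add hPpsd
  have hBB : B ⊙ B = A + (d ^ 2) • (1 : Matrix (Fin n) (Fin n) ℝ) := by
    ext i j
    by_cases hij : i = j
    · subst hij; simp [hB, hdiag, sq]
    · rcases h01 i j with h | h <;> simp [hB, hij, h]
  have hPP : (B ⊙ B - P ⊙ P).PosSemidef := by
    have : B ⊙ B - P ⊙ P = (B - P) ⊙ (B + P) := by
      ext i j; simp; ring
    rw [this]; exact hBP.hadamard hBpP
  have hAP' : (P' + K' • (1 : Matrix (Fin n) (Fin n) ℝ) - A).PosSemidef := by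
    have : P' + K' • (1 : Matrix (Fin n) (Fin n) ℝ) - A
        = U * diagonal (topF l K' + K' • (fun _ => 1) - l) * Uᵀ := by
      rw [hA]; nth_rewrite 1 [one_eq]; rw [hP', lin3, lin, lin2]
    rw [this]
    apply aux_psd_pm
    intro i
    simp only [Pi.sub_apply, Pi.add_apply, Pi.smul_apply, smul_eq_mul, topF]
    split_ifs <;> linarith
  set S := Finset.univ.filter (fun i => K ≤ l i) with hS
  have hScard : (S.card : ℝ) ≤ topSum l K / K := by
    rw [le_div_iff₀ hK]
    unfold topSum
    rw [← Finset.sum_filter, ← nsmul_eq_mul]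
    apply Finset.card_nsmul_le_sum
    intro i hi; exact (Finset.mem_filter.1 hi).2
  have hrank : ((P ⊙ P).rank : ℝ) ≤ (topSum l K / K) ^ 2 := by
    have h1 := aux_rank_had U (topF l K) S (by
      intro i hi; simp only [hS, Finset.mem_filter, Finset.mem_univ, true_and] at hi
      simp [topF, hi])
    calc ((P ⊙ P).rank : ℝ) ≤ ((S.card ^ 2 : ℕ) : ℝ) := by exact_mod_cast h1
      _ ≤ _ := by push_cast; gcongr
  have key := aux_trace_rank (P ⊙ P) P' (K' + d ^ 2) _ (by positivity)
    (hPpsd.hadamard hPpsd).isHermitian hP'psd (by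
      have : P' + (K' + d ^ 2) • (1 : Matrix (Fin n) (Fin n) ℝ) - P ⊙ P
        = (P' + K' • (1 : Matrix (Fin n) (Fin n) ℝ) - A) + (B ⊙ B - P ⊙ P) := by
        rw [hBB, add_smul]; abel
      rw [this]; exact hAP'.add hPP) hrank
  have ht' : P'.trace = topSum l K' := aux_pm_trace U hU _
  have ht : P.trace = topSum l K := aux_pm_trace U hU _
  rw [ht'] at key
  refine le_trans ?_ key
  rw [← ht, div_le_iff₀ (by exact_mod_cast hn)]
  have := sq_sum_le_card_mul_sum_sq (s := (Finset.univ : Finset (Fin n))) (f := fun i => P i i)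
  simp only [Finset.card_univ, Fintype.card_fin] at this
  calc P.trace ^ 2 = (∑ i, P i i) ^ 2 := rfl
    _ ≤ _ := this
    _ = (P ⊙ P).trace * n := by
      rw [mul_comm]; congr 1
      simp [trace, sq]

lemma aux_topSum_le {n : ℕ} (l : Fin n → ℝ) (d : ℝ) (hd : 0 ≤ d) (hl : ∀ i, -d ≤ l i)
    (h0 : ∑ i, l i = 0) (K : ℝ) : topSum l K ≤ n * d := by
  have : ∑ i : Fin n, (l i + d) = n * d := by
    rw [Finset.sum_add_distrib, h0]; simp
  rw [← this]
  apply Finset.sum_le_sum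
  intro i _
  have := hl i
  split_ifs <;> linarith

lemma aux_topSum_nonneg {n : ℕ} (l : Fin n → ℝ) (K : ℝ) (hK : 0 ≤ K) : 0 ≤ topSum l K := by
  apply Finset.sum_nonneg
  intro i _
  split_ifs <;> linarith

/-- bound for the top sums -/
lemma aux_topSum_bound {n : ℕ} (hn : 0 < n) (l : Fin n → ℝ) (d : ℝ) (hd : 1 ≤ d)
    (hdn : d ^ 10 ≤ n)
    (hl : ∀ i, -d ≤ l i) (h0 : ∑ i, l i = 0)
    (hg : ∀ K K' : ℝ, 0 < K → 0 < K' →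
      topSum l K ^ 2 / n ≤ topSum l K' + (K' + d ^ 2) * (topSum l K / K) ^ 2)
    (q : ℝ) (hq : 1 < q) : topSum l (4 * n / q) ^ 4 ≤ q * (2 * n) ^ 4 := by
  have hn' : (0 : ℝ) < n := by exact_mod_cast hn
  by_contra hcon
  push Not at hcon
  have bd : ∀ q : ℝ, 1 < q → q * (2 * n) ^ 4 < topSum l (4 * n / q) ^ 4 → 16 * q < d ^ 4 := by
    intro q hq h
    have h1 := aux_topSum_le l d (by linarith) hl h0 (4 * n / q)
    have h2 := aux_topSum_nonneg l (4 * n / q) (by positivity)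
    have h3 : topSum l (4 * n / q) ^ 4 ≤ (n * d) ^ 4 := by gcongr
    have h4 : (16 * q) * (n : ℝ) ^ 4 < d ^ 4 * (n : ℝ) ^ 4 := by nlinarith
    exact lt_of_mul_lt_mul_right h4 (by positivity)
  have step : ∀ q : ℝ, 1 < q → q * (2 * n) ^ 4 < topSum l (4 * n / q) ^ 4 →
      q ^ 2 * (2 * n) ^ 4 < topSum l (4 * n / q ^ 2) ^ 4 := by
    intro q hq h
    have hb := bd q hq h
    have hq0 : 0 < q := by linarith
    have h1 := hg (4 * n / q) (4 * n / q ^ 2) (by positivity) (by positivity)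
    set T := topSum l (4 * n / q)
    set T' := topSum l (4 * n / q ^ 2)
    have hdq : d ^ 2 ≤ 4 * n / q ^ 2 := by
      rw [le_div_iff₀ (by positivity)]
      have : q ^ 2 ≤ (d ^ 4) ^ 2 := by
        apply pow_le_pow_left₀ hq0.le; linarith
      calc d ^ 2 * q ^ 2 ≤ d ^ 2 * (d ^ 4) ^ 2 := by gcongr
        _ = d ^ 10 := by ring
        _ ≤ n := hdn
        _ ≤ 4 * n := by linarith
    have h2 : (4 * n / q ^ 2 + d ^ 2) * (T / (4 * n / q)) ^ 2 ≤ T ^ 2 / (2 * n) := by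
      calc (4 * n / q ^ 2 + d ^ 2) * (T / (4 * n / q)) ^ 2
          ≤ (4 * n / q ^ 2 + 4 * n / q ^ 2) * (T / (4 * n / q)) ^ 2 := by gcongr
        _ = T ^ 2 / (2 * n) := by field_simp; ring
    have h3 : T ^ 2 / (2 * n) ≤ T' := by
      have : T ^ 2 / n = T ^ 2 / (2 * n) + T ^ 2 / (2 * n) := by field_simp; ring
      linarith
    have h4 : T ^ 2 ≤ 2 * n * T' := by
      rw [div_le_iff₀ (by positivity)] at h3; linarith
    have h5 : (T ^ 4) ^ 2 ≤ (2 * n) ^ 4 * T' ^ 4 := by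
      calc (T ^ 4) ^ 2 = (T ^ 2) ^ 4 := by ring
        _ ≤ (2 * n * T') ^ 4 := by gcongr
        _ = _ := by ring
    have h6 : (q * (2 * n) ^ 4) ^ 2 < (T ^ 4) ^ 2 := by
      apply pow_lt_pow_left₀ h (by positivity) (by norm_num)
    have h7 : (2 * (n : ℝ)) ^ 4 * (q ^ 2 * (2 * n) ^ 4) < (2 * n) ^ 4 * T' ^ 4 := by
      calc _ = (q * (2 * n) ^ 4) ^ 2 := by ring
        _ < _ := h6
        _ ≤ _ := h5
    exact lt_of_mul_lt_mul_left h7 (by positivity)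
  have all : ∀ m : ℕ, 1 < q ^ (2 ^ m) ∧
      q ^ (2 ^ m) * (2 * n) ^ 4 < topSum l (4 * n / q ^ (2 ^ m)) ^ 4 := by
    intro m
    induction m with
    | zero => simpa using ⟨hq, hcon⟩
    | succ m ih =>
      have := step _ ih.1 ih.2
      rw [← pow_mul, ← pow_succ] at this
      refine ⟨?_, this⟩
      exact one_lt_pow₀ hq (by positivity)
  obtain ⟨m, hm⟩ := pow_unbounded_of_one_lt (d ^ 4) hq
  have h1 := bd _ (all m).1 (all m).2
  have h2 : q ^ m ≤ q ^ (2 ^ m) := pow_le_pow_right₀ hq.le (Nat.lt_two_pow_self).le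
  have : 0 < q ^ m := by positivity
  linarith

/-- bound for the tail -/
lemma aux_tail {n : ℕ} (hn : 0 < n) (l : Fin n → ℝ) (d : ℝ) (hd : 1 ≤ d)
    (hl : ∀ i, -d ≤ l i) (h0 : ∑ i, l i = 0)
    (hb : ∀ q : ℝ, 1 < q → topSum l (4 * n / q) ^ 4 ≤ q * (2 * n) ^ 4) (J : ℕ) :
    ∑ i, (if l i < 4 * n / 16 ^ J then l i ^ 2 else 0) ≤
      36 * (n : ℝ) ^ 2 / 8 ^ J + n * d ^ 2 := by
  have hn' : (0 : ℝ) < n := by exact_mod_cast hn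
  have hbJ : ∀ J : ℕ, 1 ≤ J → topSum l (4 * n / 16 ^ J) ≤ 2 * n * 2 ^ J := by
    intro J hJ
    have := hb (16 ^ J) (one_lt_pow₀ (by norm_num) (by omega))
    have h16 : (16 : ℝ) ^ J = (2 ^ J) ^ 4 := by
      rw [← pow_mul, mul_comm, pow_mul]; norm_num
    rw [h16, ← mul_pow, ← h16] at this
    have h2 := le_of_pow_le_pow_left₀ (by norm_num) (by positivity) this
    linarith
  set t : ℕ → ℝ := fun J => ∑ i, (if l i < 4 * n / 16 ^ J ∧ 0 ≤ l i then l i ^ 2 else 0) with ht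
  have hstep : ∀ J, t J ≤ t (J + 1) + 16 * n ^ 2 / 8 ^ J := by
    intro J
    have h1 : t J ≤ t (J + 1) + 4 * n / 16 ^ J * topSum l (4 * n / 16 ^ (J + 1)) := by
      simp only [ht, topSum]
      rw [Finset.mul_sum, ← Finset.sum_add_distrib]
      apply Finset.sum_le_sum
      intro i _
      have hpos : (0 : ℝ) ≤ 4 * n / 16 ^ J := by positivity
      by_cases h1 : l i < 4 * n / 16 ^ J ∧ 0 ≤ l i
      · rw [if_pos h1]
        by_cases h2 : 4 * n / 16 ^ (J + 1) ≤ l i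
        · rw [if_pos h2, if_neg (by rintro ⟨h, _⟩; linarith)]
          nlinarith [h1.1, h1.2]
        · rw [if_neg h2, if_pos ⟨by linarith, h1.2⟩]; linarith
      · rw [if_neg h1]
        apply add_nonneg
        · split_ifs <;> positivity
        · apply mul_nonneg hpos
          have : (0 : ℝ) ≤ 4 * n / 16 ^ (J + 1) := by positivity
          split_ifs <;> linarith
    have h2 := hbJ (J + 1) (by omega)
    have h3 : 4 * n / 16 ^ J * topSum l (4 * n / 16 ^ (J + 1)) ≤ 16 * n ^ 2 / 8 ^ J := by
      calc 4 * n / 16 ^ J * topSum l (4 * n / 16 ^ (J + 1))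
          ≤ 4 * n / 16 ^ J * (2 * n * 2 ^ (J + 1)) := by gcongr
        _ = 16 * n ^ 2 / 8 ^ J := by
          have : (16 : ℝ) ^ J = 8 ^ J * 2 ^ J := by rw [← mul_pow]; norm_num
          rw [this, pow_succ]; field_simp; ring
    linarith
  have hL : ∀ L : ℕ, t J ≤ t (J + L) + 32 * n ^ 2 / 8 ^ J - 32 * n ^ 2 / 8 ^ (J + L) := by
    intro L
    induction L with
    | zero => simp
    | succ L ih =>
      have h1 := hstep (J + L)
      have h2 : 32 * (n : ℝ) ^ 2 / 8 ^ (J + (L + 1)) = 4 * n ^ 2 / 8 ^ (J + L) := by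
        rw [← add_assoc, pow_succ]; field_simp; ring
      have h3 : 32 * (n : ℝ) ^ 2 / 8 ^ (J + L) = 8 * (4 * n ^ 2 / 8 ^ (J + L)) := by ring
      have h4 : 16 * (n : ℝ) ^ 2 / 8 ^ (J + L) = 4 * (4 * n ^ 2 / 8 ^ (J + L)) := by ring
      have h5 : (0 : ℝ) ≤ 4 * n ^ 2 / 8 ^ (J + L) := by positivity
      rw [← add_assoc] at h2 ⊢
      linarith
  have hend : ∀ M : ℕ, t M ≤ 4 * n ^ 2 * d / 16 ^ M := by
    intro M
    have hpos : (0 : ℝ) ≤ 4 * n / 16 ^ M := by positivity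
    have h1 : t M ≤ 4 * n / 16 ^ M * topSum l 0 := by
      simp only [ht, topSum]
      rw [Finset.mul_sum]
      apply Finset.sum_le_sum
      intro i _
      by_cases h1 : l i < 4 * n / 16 ^ M ∧ 0 ≤ l i
      · rw [if_pos h1, if_pos h1.2]; nlinarith [h1.1, h1.2]
      · rw [if_neg h1]; apply mul_nonneg hpos; split_ifs <;> linarith
    calc t M ≤ _ := h1
      _ ≤ 4 * n / 16 ^ M * (n * d) := by
        gcongr; exact aux_topSum_le l d (by linarith) hl h0 0
      _ = _ := by ring
  have htJ : t J ≤ 36 * n ^ 2 / 8 ^ J := by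
    obtain ⟨L, hL2⟩ := pow_unbounded_of_one_lt d (show (1 : ℝ) < 16 by norm_num)
    have h1 := hL L
    have h2 := hend (J + L)
    have h3 : 4 * (n : ℝ) ^ 2 * d / 16 ^ (J + L) ≤ 4 * n ^ 2 / 8 ^ J := by
      rw [div_le_div_iff₀ (by positivity) (by positivity), pow_add]
      have : (8 : ℝ) ^ J ≤ 16 ^ J := by gcongr; norm_num
      calc 4 * (n : ℝ) ^ 2 * d * 8 ^ J ≤ 4 * (n : ℝ) ^ 2 * 16 ^ L * 16 ^ J := by gcongr
        _ = _ := by ring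
    have h4 : (0 : ℝ) ≤ 32 * n ^ 2 / 8 ^ (J + L) := by positivity
    have h5 : 36 * (n : ℝ) ^ 2 / 8 ^ J = 32 * n ^ 2 / 8 ^ J + 4 * n ^ 2 / 8 ^ J := by ring
    linarith
  calc ∑ i, (if l i < 4 * n / 16 ^ J then l i ^ 2 else 0)
      ≤ ∑ i, ((if l i < 4 * n / 16 ^ J ∧ 0 ≤ l i then l i ^ 2 else 0) + d ^ 2) := by
        apply Finset.sum_le_sum
        intro i _
        by_cases hp : 0 ≤ l i
        · simp only [hp, and_true]; nlinarith
        · have : l i ^ 2 ≤ d ^ 2 := by nlinarith [hl i]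
          simp only [hp, and_false, if_false]
          split_ifs
          · linarith
          · positivity
    _ = t J + n * d ^ 2 := by
        rw [Finset.sum_add_distrib]; simp [ht]
    _ ≤ _ := by linarith
lemma aux_psd_iff {n : ℕ} (M : Matrix (Fin n) (Fin n) ℝ) :
    M.PosSemidef ↔ (∀ i j, M i j = M j i) ∧ ∀ x : Fin n → ℝ, 0 ≤ ∑ i, ∑ j, M i j * x i * x j := by
  have e : ∀ x : Fin n → ℝ, star x ⬝ᵥ (M.mulVec x) = ∑ i, ∑ j, M i j * x i * x j := by
    intro x
    simp only [dotProduct, Matrix.mulVec, star_trivial, Finset.mul_sum]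
    refine Finset.sum_congr rfl fun i _ => Finset.sum_congr rfl fun j _ => ?_
    ring
  rw [Matrix.posSemidef_iff_dotProduct_mulVec]
  constructor
  · rintro ⟨h1, h2⟩
    refine ⟨fun i j => ?_, fun x => ?_⟩
    · have := h1.apply j i
      simpa using this
    · rw [← e]; exact h2 x
  · rintro ⟨h1, h2⟩
    refine ⟨?_, fun x => ?_⟩
    · ext i j; simp [h1 i j]
    · rw [e]; exact h2 x

lemma aux_psd_entry {n : ℕ} (M : Matrix (Fin n) (Fin n) ℝ) (hM : M.PosSemidef)
    (h1 : ∀ i, M i i ≤ 1) (i j : Fin n) : |M i j| ≤ 1 := by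
  obtain ⟨hs, hq⟩ := (aux_psd_iff M).1 hM
  have key : ∀ c : ℝ, 0 ≤ M i i + 2 * c * M i j + c ^ 2 * M j j := by
    intro c
    have h := hq (Pi.single i 1 + c • Pi.single j 1)
    have e : ∑ a, ∑ b, M a b * (Pi.single i 1 + c • Pi.single j 1 : Fin n → ℝ) a *
        (Pi.single i 1 + c • Pi.single j 1 : Fin n → ℝ) b =
        M i i + c * M i j + c * M j i + c ^ 2 * M j j := by
      simp only [Pi.add_apply, Pi.smul_apply, smul_eq_mul, mul_add, add_mul, Finset.sum_add_distrib,
        Pi.single_apply]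
      simp
      ring
    rw [e, hs j i] at h
    linarith
  have k1 := key 1
  have k2 := key (-1)
  have := h1 i
  have := h1 j
  rw [abs_le]
  constructor <;> linarith

lemma aux_adj_bound {n : ℕ} (G : SimpleGraph (Fin n)) (i j : Fin n) :
    adjMat G i j = 0 ∨ adjMat G i j = 1 := by
  unfold adjMat; simp only [Matrix.of_apply]; split_ifs <;> simp

lemma aux_bdd {n : ℕ} (G : SimpleGraph (Fin n)) :
    BddAbove {x : ℝ | ∃ M : Matrix (Fin n) (Fin n) ℝ, M.PosSemidef ∧ (∀ i, M i i ≤ 1) ∧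
    x = (1 / 2) * ∑ i, ∑ j, (-(adjMat G)) i j * M i j} := by
  refine ⟨(1 / 2) * ∑ i : Fin n, ∑ j : Fin n, 1, ?_⟩
  rintro x ⟨M, hM, h1, rfl⟩
  gcongr with i _ j _
  have := abs_le.1 (aux_psd_entry M hM h1 i j)
  rcases aux_adj_bound G i j with h | h <;> simp [h] <;> linarith

lemma aux_compact (n : ℕ) :
    IsCompact {M : Matrix (Fin n) (Fin n) ℝ | M.PosSemidef ∧ ∀ i, M i i ≤ 1} := by
  have hc : IsCompact (Set.pi Set.univ fun _ : Fin n => Set.pi Set.univ fun _ : Fin n =>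
      Set.Icc (-1 : ℝ) 1) :=
    isCompact_univ_pi fun _ => isCompact_univ_pi fun _ => isCompact_Icc
  refine IsCompact.of_isClosed_subset hc ?_ ?_
  · simp only [aux_psd_iff]
    have : {M : Fin n → Fin n → ℝ | ((∀ i j, M i j = M j i) ∧
        ∀ x : Fin n → ℝ, 0 ≤ ∑ i, ∑ j, M i j * x i * x j) ∧ ∀ i, M i i ≤ 1} =
        ((⋂ i, ⋂ j, {M | M i j = M j i}) ∩
          ⋂ x : Fin n → ℝ, {M | 0 ≤ ∑ i, ∑ j, M i j * x i * x j}) ∩ ⋂ i, {M | M i i ≤ 1} := by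
      ext M; simp
    refine (this ▸ ?_ : IsClosed {M : Fin n → Fin n → ℝ | ((∀ i j, M i j = M j i) ∧
        ∀ x : Fin n → ℝ, 0 ≤ ∑ i, ∑ j, M i j * x i * x j) ∧ ∀ i, M i i ≤ 1})
    refine IsClosed.inter (IsClosed.inter ?_ ?_) ?_
    · exact isClosed_iInter fun i => isClosed_iInter fun j =>
        isClosed_eq (by fun_prop) (by fun_prop)
    · exact isClosed_iInter fun x => isClosed_le (by fun_prop) (by fun_prop)
    · exact isClosed_iInter fun x => isClosed_le (by fun_prop) (by fun_prop)
  · rintro M ⟨hM, h1⟩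
    intro i _ j _
    exact abs_le.1 (aux_psd_entry M hM h1 i j)

lemma aux_sdp {n : ℕ} (G : SimpleGraph (Fin n)) (d : ℝ) (hd : 0 < d) :
    ∃ U : Finset (Fin n), d * (Uᶜ).card ≤ 2 * spStar G ∧
      ∀ x : Fin n → ℝ, (∀ i, i ∉ U → x i = 0) →
        0 ≤ ∑ i, ∑ j, adjMat G i j * x i * x j + d * ∑ i, x i ^ 2 := by
  classical
  set f : Matrix (Fin n) (Fin n) ℝ → ℝ := fun M =>
    ∑ i, ∑ j, (-(adjMat G)) i j * M i j - d * ∑ i, M i i with hf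
  have hcont : Continuous f := by
    have : Continuous fun M : Fin n → Fin n → ℝ =>
      ∑ i, ∑ j, (-(adjMat G)) i j * M i j - d * ∑ i, M i i := by fun_prop
    exact this
  obtain ⟨M, ⟨hM, hM1⟩, hmax⟩ := (aux_compact n).exists_isMaxOn
    ⟨0, Matrix.PosSemidef.zero, by simp⟩ hcont.continuousOn
  have hM0 : 0 ≤ f M := by
    have := hmax (show (0 : Matrix (Fin n) (Fin n) ℝ) ∈ _ from ⟨Matrix.PosSemidef.zero, by simp⟩)
    simpa [hf] using this
  refine ⟨Finset.univ.filter fun i => M i i < 1, ?_, ?_⟩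
  · have h1 : (1 / 2) * ∑ i, ∑ j, (-(adjMat G)) i j * M i j ≤ spStar G :=
      le_csSup (aux_bdd G) ⟨M, hM, hM1, rfl⟩
    have h2 : (((Finset.univ.filter fun i => M i i < 1)ᶜ.card : ℕ) : ℝ) ≤ ∑ i, M i i := by
      have h3 : (((Finset.univ.filter fun i => M i i < 1)ᶜ.card : ℕ) : ℝ)
          = ∑ i ∈ (Finset.univ.filter fun i => M i i < 1)ᶜ, (1 : ℝ) := by simp
      rw [h3]
      calc _ ≤ ∑ i ∈ (Finset.univ.filter fun i => M i i < 1)ᶜ, M i i := by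
            apply Finset.sum_le_sum
            intro i hi
            simpa using hi
        _ ≤ _ := by
            apply Finset.sum_le_sum_of_subset_of_nonneg (Finset.subset_univ _)
            intro i _ _
            exact hM.diag_nonneg
    simp only [hf] at hM0
    have := mul_le_mul_of_nonneg_left h2 hd.le
    linarith
  · intro x hx
    have hev : ∀ᶠ t : ℝ in nhdsWithin 0 (Set.Ioi 0), ∀ i, M i i + t * x i ^ 2 ≤ 1 := by
      rw [Filter.eventually_all]
      intro i
      by_cases hi : M i i < 1
      · have hc : Continuous fun t : ℝ => M i i + t * x i ^ 2 := by fun_prop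
        have := hc.tendsto 0
        simp only [zero_mul, add_zero] at this
        have h2 := (this.eventually (gt_mem_nhds hi))
        exact (h2.filter_mono nhdsWithin_le_nhds).mono fun t ht => le_of_lt ht
      · have : x i = 0 := hx i (by simpa using hi)
        simp only [this]
        exact Filter.Eventually.of_forall fun t => by simpa using hM1 i
    obtain ⟨t, ht, ht0⟩ := (hev.and self_mem_nhdsWithin).exists
    have ht0 : 0 < t := ht0
    set M' : Matrix (Fin n) (Fin n) ℝ := M + t • Matrix.vecMulVec x x with hM'
    have hv : (Matrix.vecMulVec x x).PosSemidef := by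
      have := Matrix.posSemidef_vecMulVec_self_star x
      simpa using this
    have hM'p : M'.PosSemidef := hM.add (hv.smul ht0.le)
    have hle := hmax (show M' ∈ _ from ⟨hM'p, fun i => by
      have := ht i
      simp only [hM', Matrix.add_apply, Matrix.smul_apply, Matrix.vecMulVec_apply, smul_eq_mul]
      linarith⟩)
    have hle : f M' ≤ f M := hle
    have he : f M' = f M - t * (∑ i, ∑ j, adjMat G i j * x i * x j + d * ∑ i, x i ^ 2) := by
      simp only [hf, hM', Matrix.add_apply, Matrix.smul_apply, Matrix.vecMulVec_apply, smul_eq_mul,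
        Matrix.neg_apply, mul_add, Finset.sum_add_distrib, Finset.mul_sum]
      have e1 : ∑ i, ∑ j, -adjMat G i j * (t * (x i * x j))
          = - ∑ i, ∑ j, t * (adjMat G i j * x i * x j) := by
        simp only [← Finset.sum_neg_distrib]
        refine Finset.sum_congr rfl fun i _ => Finset.sum_congr rfl fun j _ => ?_
        ring
      have e2 : ∑ i, d * (t * (x i * x i)) = ∑ i, t * (d * x i ^ 2) :=
        Finset.sum_congr rfl fun i _ => by ring
      rw [e1, e2]; ring
    by_contra hneg
    push Not at hneg
    nlinarith

lemma aux_cells (r : ℕ) (R θ : ℝ) (hθ : 0 < θ) : ∃ N : ℕ, 0 < N ∧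
    ∀ (ι S : Type) [Fintype S] (W : Finset ι) (φ : ι → S → ℝ), Fintype.card S ≤ r →
      (∀ i ∈ W, ∀ k, φ i k ^ 2 ≤ R) →
      ∃ X ⊆ W, (W.card : ℝ) ≤ N * X.card ∧
        ∀ i ∈ X, ∀ j ∈ X, ∑ k, (φ i k - φ j k) ^ 2 ≤ θ := by
  classical
  set η := Real.sqrt (θ / (r + 1)) with hη
  have hη0 : 0 < η := Real.sqrt_pos.2 (by positivity)
  have hη2 : η ^ 2 = θ / (r + 1) := Real.sq_sqrt (by positivity)
  obtain ⟨m, hm⟩ := exists_nat_ge (Real.sqrt R / η + 1)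
  refine ⟨(2 * m + 1) ^ r, by positivity, ?_⟩
  intro ι S _ W φ hS hW
  set t : Finset (S → ℤ) := Fintype.piFinset fun _ => Finset.Icc (-(m : ℤ)) m with ht
  have htc : t.card = (2 * m + 1) ^ Fintype.card S := by
    rw [ht, Fintype.card_piFinset]
    simp only [Int.card_Icc, Finset.prod_const, Finset.card_univ]
    congr 1
    omega
  have hmaps : ∀ i ∈ W, (fun k => ⌊φ i k / η⌋) ∈ t := by
    intro i hi
    rw [ht, Fintype.mem_piFinset]
    intro k
    have h1 : |φ i k| ≤ Real.sqrt R := Real.abs_le_sqrt (hW i hi k)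
    have h2 : |φ i k / η| ≤ m - 1 := by
      rw [abs_div, abs_of_pos hη0]
      have : |φ i k| / η ≤ Real.sqrt R / η := by gcongr
      linarith
    rw [abs_le] at h2
    rw [Finset.mem_Icc]
    constructor
    · rw [Int.le_floor]; push_cast; linarith
    · have : ((⌊φ i k / η⌋ : ℤ) : ℝ) ≤ m := (Int.floor_le _).trans (by linarith)
      exact_mod_cast this
  have htne : t.Nonempty := Finset.card_pos.1 (by rw [htc]; positivity)
  obtain ⟨y, hy, hcard⟩ := Finset.exists_le_card_fiber_of_nsmul_le_card_of_maps_to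
    (M := ℝ) (b := W.card / t.card) hmaps htne (by
      rw [nsmul_eq_mul, mul_div_cancel₀]
      exact_mod_cast (Finset.card_pos.2 htne).ne')
  refine ⟨W.filter fun i => (fun k => ⌊φ i k / η⌋) = y, Finset.filter_subset _ _, ?_, ?_⟩
  · rw [div_le_iff₀ (by exact_mod_cast (Finset.card_pos.2 htne))] at hcard
    refine hcard.trans ?_
    rw [mul_comm]
    gcongr
    rw [htc]
    exact Nat.pow_le_pow_right (by omega) hS
  · intro i hi j hj
    have hi := (Finset.mem_filter.1 hi).2
    have hj := (Finset.mem_filter.1 hj).2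
    have hk : ∀ k, (φ i k - φ j k) ^ 2 ≤ η ^ 2 := by
      intro k
      have e : ⌊φ i k / η⌋ = ⌊φ j k / η⌋ := by
        have := congrFun (hi.trans hj.symm) k
        exact this
      have := Int.abs_sub_lt_one_of_floor_eq_floor e
      rw [← sub_div, abs_div, abs_of_pos hη0, div_lt_one hη0] at this
      rw [← sq_abs]
      gcongr
    calc ∑ k, (φ i k - φ j k) ^ 2 ≤ ∑ k : S, η ^ 2 := Finset.sum_le_sum fun k _ => hk k
      _ = Fintype.card S * η ^ 2 := by simp
      _ ≤ r * η ^ 2 := by gcongr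
      _ ≤ θ := by
        rw [hη2, ← mul_div_assoc, div_le_iff₀ (by positivity)]
        nlinarith

/-- closed neighbourhood -/
def clN {n : ℕ} (G : SimpleGraph (Fin n)) (u v : Fin n) : Prop := v = u ∨ G.Adj u v

def badTri {n : ℕ} (G : SimpleGraph (Fin n)) (u v w : Fin n) : Prop :=
  v ≠ w ∧ ((clN G u v ∧ clN G u w ∧ ¬ G.Adj v w) ∨
    (clN G u v ∧ ¬ clN G u w ∧ G.Adj v w) ∨ (¬ clN G u v ∧ clN G u w ∧ G.Adj v w))

open scoped Classical in
lemma aux_cluster {n : ℕ} (G : SimpleGraph (Fin n)) (e κ : ℝ) (he : 0 < e) (hκ : 0 ≤ κ)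
    (R0 : Finset (Fin n))
    (h : ∀ u ∈ R0, (((R0 ×ˢ R0).filter fun p => badTri G u p.1 p.2).card : ℝ) ≤ κ) :
    ∀ (m : ℕ) (R : Finset (Fin n)), R.card ≤ m → R ⊆ R0 → ∃ g : Fin n → Fin n, (∀ v ∈ R, g v ∈ R) ∧
      (((R ×ˢ R).filter fun p => p.1 ≠ p.2 ∧ ¬ (G.Adj p.1 p.2 ↔ g p.1 = g p.2)).card : ℝ)
        ≤ (e + κ / e) * R.card := by
  intro m
  induction m with
  | zero =>
    intro R hR _
    have : R = ∅ := by simpa using hR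
    subst this
    exact ⟨id, by simp, by simp⟩
  | succ m ih =>
    intro R hR hR0
    by_cases hex : ∃ u ∈ R, e ≤ ((R.filter fun v => clN G u v).card : ℝ)
    · obtain ⟨u, hu, hue⟩ := hex
      set R' := R.filter fun v => ¬ clN G u v with hR'
      have hcards : (R.filter fun v => clN G u v).card + R'.card = R.card :=
        Finset.card_filter_add_card_filter_not _
      have hpos : 0 < (R.filter fun v => clN G u v).card := by
        apply Finset.card_pos.2
        exact ⟨u, Finset.mem_filter.2 ⟨hu, Or.inl rfl⟩⟩
      obtain ⟨g, hg, hgc⟩ := ih R' (by omega) ((Finset.filter_subset _ _).trans hR0)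
      refine ⟨fun v => if clN G u v then u else g v, ?_, ?_⟩
      · intro v hv
        by_cases hc : clN G u v
        · simp only [hc, if_true]; exact hu
        · simp only [hc, if_false]
          exact (Finset.filter_subset _ _) (hg v (Finset.mem_filter.2 ⟨hv, hc⟩))
      · have hgu : ∀ v ∈ R, ¬ clN G u v → g v ≠ u := by
          intro v hv hc heq
          have := (Finset.mem_filter.1 (hg v (Finset.mem_filter.2 ⟨hv, hc⟩))).2
          exact this (Or.inl heq)
        have hsub : ((R ×ˢ R).filter fun p => p.1 ≠ p.2 ∧ ¬ (G.Adj p.1 p.2 ↔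
            (if clN G u p.1 then u else g p.1) = (if clN G u p.2 then u else g p.2))) ⊆
            ((R0 ×ˢ R0).filter fun p => badTri G u p.1 p.2) ∪
            ((R' ×ˢ R').filter fun p => p.1 ≠ p.2 ∧ ¬ (G.Adj p.1 p.2 ↔ g p.1 = g p.2)) := by
          rintro ⟨v, w⟩ hp
          simp only [Finset.mem_filter, Finset.mem_product, Finset.mem_union] at hp ⊢
          obtain ⟨⟨hv, hw⟩, hne, hp⟩ := hp
          by_cases hcv : clN G u v <;> by_cases hcw : clN G u w
          · left
            refine ⟨⟨hR0 hv, hR0 hw⟩, hne, Or.inl ⟨hcv, hcw, ?_⟩⟩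
            simpa [hcv, hcw] using hp
          · left
            have := hgu w hw hcw
            refine ⟨⟨hR0 hv, hR0 hw⟩, hne, Or.inr (Or.inl ⟨hcv, hcw, ?_⟩)⟩
            simpa [hcv, hcw, this.symm] using hp
          · left
            have := hgu v hv hcv
            refine ⟨⟨hR0 hv, hR0 hw⟩, hne, Or.inr (Or.inr ⟨hcv, hcw, ?_⟩)⟩
            simpa [hcv, hcw, this] using hp
          · right
            refine ⟨⟨Finset.mem_filter.2 ⟨hv, hcv⟩, Finset.mem_filter.2 ⟨hw, hcw⟩⟩, hne, ?_⟩
            simpa only [hcv, hcw, if_false] using hp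
        have hc1 := (Finset.card_le_card hsub).trans (Finset.card_union_le _ _)
        have hc2 := h u (hR0 hu)
        have hc3 : ((((R ×ˢ R).filter fun p => p.1 ≠ p.2 ∧ ¬ (G.Adj p.1 p.2 ↔
            (if clN G u p.1 then u else g p.1) = (if clN G u p.2 then u else g p.2))).card : ℕ) : ℝ)
            ≤ κ + (e + κ / e) * R'.card := by
          calc _ ≤ _ := (Nat.cast_le (α := ℝ)).2 hc1
            _ ≤ _ := by push_cast; linarith
        refine hc3.trans ?_
        have h4 : (R.card : ℝ) = (R.filter fun v => clN G u v).card + R'.card := by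
          exact_mod_cast hcards.symm
        rw [h4]
        have h5 : (e + κ / e) * e ≤ (e + κ / e) * (R.filter fun v => clN G u v).card := by gcongr
        have h6 : (e + κ / e) * e = e * e + κ := by field_simp
        nlinarith
    · push Not at hex
      refine ⟨id, fun v hv => hv, ?_⟩
      have hsub : ((R ×ˢ R).filter fun p => p.1 ≠ p.2 ∧ ¬ (G.Adj p.1 p.2 ↔ id p.1 = id p.2)) ⊆
          R.biUnion fun u => (R.filter fun v => clN G u v).image fun v => (u, v) := by
        rintro ⟨v, w⟩ hp
        simp only [Finset.mem_filter, Finset.mem_product, id] at hp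
        obtain ⟨⟨hv, hw⟩, hne, hp⟩ := hp
        simp only [hne, iff_false, not_not] at hp
        simp only [Finset.mem_biUnion, Finset.mem_image, Finset.mem_filter]
        exact ⟨v, hv, w, ⟨hw, Or.inr hp⟩, rfl⟩
      have hc1 := (Finset.card_le_card hsub).trans Finset.card_biUnion_le
      calc _ ≤ _ := (Nat.cast_le (α := ℝ)).2 hc1
        _ = ∑ u ∈ R, (((R.filter fun v => clN G u v).image fun v => (u, v)).card : ℝ) := by push_cast; rfl
        _ ≤ ∑ u ∈ R, e := by
          apply Finset.sum_le_sum
          intro u hu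
          refine le_trans ?_ (hex u hu).le
          exact_mod_cast Finset.card_image_le
        _ = e * R.card := by simp [mul_comm]
        _ ≤ (e + κ / e) * R.card := by
          gcongr
          have : 0 ≤ κ / e := by positivity
          linarith
lemma aux_topSum_J {n : ℕ} (l : Fin n → ℝ)
    (hb : ∀ q : ℝ, 1 < q → topSum l (4 * n / q) ^ 4 ≤ q * (2 * n) ^ 4) (J : ℕ) (hJ : 1 ≤ J) :
    topSum l (4 * n / 16 ^ J) ≤ 2 * n * 2 ^ J := by
  have := hb (16 ^ J) (one_lt_pow₀ (by norm_num) (by omega))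
  have h16 : (16 : ℝ) ^ J = (2 ^ J) ^ 4 := by
    rw [← pow_mul, mul_comm, pow_mul]; norm_num
  rw [h16, ← mul_pow, ← h16] at this
  have h2 := le_of_pow_le_pow_left₀ (by norm_num) (by positivity) this
  linarith

open Matrix in
open scoped Classical in
lemma aux_P (a γ : ℝ) (ha : 0 < a) (hγ : 0 < γ) : ∃ ζ : ℝ, 0 < ζ ∧
    ∀ (n : ℕ) (d : ℝ), 0 < n → 1 ≤ d → d ^ 10 ≤ n → d ^ 2 ≤ ζ * n →
    ∀ A : Matrix (Fin n) (Fin n) ℝ, (∀ i j, A i j = 0 ∨ A i j = 1) → (∀ i, A i i = 0) →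
      (∀ i j, A i j = A j i) →
      (∀ x : Fin n → ℝ, 0 ≤ ∑ i, ∑ j, A i j * x i * x j + d * ∑ i, x i ^ 2) →
      ∃ P : Matrix (Fin n) (Fin n) ℝ, P.PosSemidef ∧
        ((Finset.univ.filter fun i => 1.01 < P i i).card : ℝ) ≤ a * n ∧
        ∑ i, ∑ j, (A i j - P i j) ^ 2 ≤ γ * n ^ 2 := by
  obtain ⟨J0, hJ0⟩ := pow_unbounded_of_one_lt (72 / γ) (show (1 : ℝ) < 8 by norm_num)
  set J := J0 + 1 with hJdef
  have hJ : 72 / γ < 8 ^ J := by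
    refine hJ0.trans_le (pow_le_pow_right₀ (by norm_num) (by omega))
  obtain ⟨N, hN, hcells⟩ := aux_cells (32 ^ J) (4 * 2 ^ J / a) 0.01 (by norm_num)
  have hN' : (0 : ℝ) < N := by exact_mod_cast hN
  refine ⟨min (γ / 2) (a / (400 * N)), by positivity, ?_⟩
  intro n d hn hd hd10 hd2 A h01 hdiag hsymm hpsd
  have hn' : (0 : ℝ) < n := by exact_mod_cast hn
  have hdA : d ^ 2 ≤ γ / 2 * n := hd2.trans (by gcongr; exact min_le_left _ _)
  have hdB : d ^ 2 ≤ a / (400 * N) * n := hd2.trans (by gcongr; exact min_le_right _ _)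
  have hBpsd : (A + d • (1 : Matrix (Fin n) (Fin n) ℝ)).PosSemidef := by
    rw [aux_psd_iff]
    refine ⟨fun i j => ?_, fun x => ?_⟩
    · simp only [Matrix.add_apply, Matrix.smul_apply, Matrix.one_apply, hsymm i j, eq_comm (a := i)]
    · refine (hpsd x).trans_eq ?_
      simp only [Matrix.add_apply, Matrix.smul_apply, Matrix.one_apply, add_mul, Finset.sum_add_distrib, Finset.mul_sum]
      congr 1
      refine Finset.sum_congr rfl fun i _ => ?_
      simp
      ring
  have hAh : A.IsHermitian := by
    ext i j; simp [hsymm i j]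
  obtain ⟨l, U, hU, hU', hA, -⟩ := aux_spec A hAh
  have hl : ∀ i, -d ≤ l i := by
    intro i
    have := (hBpsd.conjTranspose_mul_mul_same U).diag_nonneg (i := i)
    rw [conjTranspose_eq_transpose_of_trivial, mul_add, add_mul, Matrix.mul_smul,
      Matrix.smul_mul, mul_one, hU, hA] at this
    have e : Uᵀ * (U * diagonal l * Uᵀ) * U = diagonal l := by
      rw [← mul_assoc, ← mul_assoc, hU, one_mul, mul_assoc, hU, mul_one]
    rw [e] at this
    simp at this
    linarith
  have h0 : ∑ i, l i = 0 := by
    rw [← aux_pm_trace U hU, ← hA]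
    simp [trace, hdiag]
  have hg := aux_growth hn A U l d (by linarith) h01 hdiag hU hU' hA hl
  have hb := aux_topSum_bound hn l d hd hd10 hl h0 hg
  have htail := aux_tail hn l d hd hl h0 hb J
  have hTop := aux_topSum_J l hb J (by omega)
  set K : ℝ := 4 * n / 16 ^ J with hK
  have hK0 : 0 < K := by positivity
  set P := U * diagonal (topF l K) * Uᵀ with hP
  have hf0 : ∀ i, 0 ≤ topF l K i := by
    intro i; unfold topF; split_ifs <;> linarith
  have hPpsd : P.PosSemidef := aux_psd_pm U _ hf0
  have ht : ∑ i, P i i = topSum l K := aux_pm_trace U hU _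
  have lin2 : ∀ f g : Fin n → ℝ, U * diagonal f * Uᵀ - U * diagonal g * Uᵀ
      = U * diagonal (f - g) * Uᵀ := by
    intro f g
    rw [← sub_mul, ← mul_sub, diagonal_sub]; rfl
  have hAP : A - P = U * diagonal (l - topF l K) * Uᵀ := by
    rw [hP]; nth_rewrite 1 [hA]; rw [lin2]
  refine ⟨P, hPpsd, ?_, ?_⟩
  · -- diagonal bound
    have hBP : ∀ x : Fin n → ℝ, 0 ≤ ∑ i, ∑ j, (A i j - P i j) * x i * x j + d * ∑ i, x i ^ 2 := by
      have h1 : (A - P + d • (1 : Matrix (Fin n) (Fin n) ℝ)).PosSemidef := by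
        have one_eq : d • (1 : Matrix (Fin n) (Fin n) ℝ) = U * diagonal (fun _ => d) * Uᵀ := by
          have : diagonal (fun _ : Fin n => d) = d • (1 : Matrix (Fin n) (Fin n) ℝ) := by
            rw [smul_one_eq_diagonal]
          rw [this, Matrix.mul_smul, Matrix.smul_mul, mul_one, hU']
        rw [hAP, one_eq, ← add_mul, ← mul_add, diagonal_add]
        apply aux_psd_pm
        intro i
        have := hl i
        simp only [Pi.sub_apply, topF]
        split_ifs <;> linarith
      intro x
      refine (((aux_psd_iff _).1 h1).2 x).trans_eq ?_
      simp only [Matrix.add_apply, Matrix.sub_apply, Matrix.smul_apply, Matrix.one_apply, add_mul, Finset.sum_add_distrib, Finset.mul_sum]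
      congr 1
      refine Finset.sum_congr rfl fun i _ => ?_
      simp
      ring
    set φ : Fin n → {k // K ≤ l k} → ℝ := fun i k => Real.sqrt (l k) * U i k with hφ
    have hPφ : ∀ i j, P i j = ∑ k, φ i k * φ j k := by
      intro i j
      rw [hP, aux_pm_apply]
      have e1 : ∑ k, topF l K k * U i k * U j k
          = ∑ k ∈ Finset.univ.filter (fun k => K ≤ l k), l k * U i k * U j k := by
        rw [Finset.sum_filter]
        refine Finset.sum_congr rfl fun k _ => ?_
        unfold topF; split_ifs <;> simp
      rw [e1, Finset.sum_subtype (p := fun k => K ≤ l k) _ (by simp)]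
      refine Finset.sum_congr rfl fun k _ => ?_
      have : Real.sqrt (l k) * Real.sqrt (l k) = l k := Real.mul_self_sqrt (hK0.le.trans k.2)
      simp only [hφ]
      calc _ = (Real.sqrt (l k) * Real.sqrt (l k)) * U i k * U j k := by rw [this]
        _ = _ := by ring
    have hScard : Fintype.card {k // K ≤ l k} ≤ 32 ^ J := by
      have h1 : (Fintype.card {k // K ≤ l k} : ℝ) * K ≤ topSum l K := by
        unfold topSum
        rw [← Finset.sum_filter, ← nsmul_eq_mul, Fintype.card_subtype]
        apply Finset.card_nsmul_le_sum
        intro i hi; exact (Finset.mem_filter.1 hi).2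
      have h2 : (Fintype.card {k // K ≤ l k} : ℝ) * K ≤ 32 ^ J * K := by
        refine h1.trans (hTop.trans ?_)
        have : (32 : ℝ) ^ J * K = 4 * n * 2 ^ J := by
          rw [hK]
          have : (32 : ℝ) ^ J = 16 ^ J * 2 ^ J := by rw [← mul_pow]; norm_num
          rw [this]; field_simp
        rw [this]
        have : (0 : ℝ) < n * 2 ^ J := by positivity
        nlinarith
      have h3 := le_of_mul_le_mul_right h2 hK0
      exact_mod_cast h3
    set R : ℝ := 4 * 2 ^ J / a with hR
    have hR0 : 0 < R := by positivity
    set W1 := Finset.univ.filter (fun i => 1.01 < P i i ∧ P i i ≤ R) with hW1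
    set W2 := Finset.univ.filter (fun i => R < P i i) with hW2
    have hsub : (Finset.univ.filter fun i => 1.01 < P i i) ⊆ W1 ∪ W2 := by
      intro i hi
      simp only [hW1, hW2, Finset.mem_union, Finset.mem_filter, Finset.mem_univ, true_and] at hi ⊢
      by_cases h : P i i ≤ R
      · exact Or.inl ⟨hi, h⟩
      · exact Or.inr (lt_of_not_ge h)
    have hW2c : (W2.card : ℝ) ≤ a / 2 * n := by
      have h1 : (W2.card : ℝ) * R ≤ ∑ i, P i i := by
        calc (W2.card : ℝ) * R ≤ ∑ i ∈ W2, P i i := by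
              rw [← nsmul_eq_mul]
              apply Finset.card_nsmul_le_sum
              intro i hi; exact (Finset.mem_filter.1 hi).2.le
          _ ≤ _ := Finset.sum_le_sum_of_subset_of_nonneg (Finset.subset_univ _)
              fun i _ _ => hPpsd.diag_nonneg
      rw [ht] at h1
      have h2 : (W2.card : ℝ) * R ≤ (a / 2 * n) * R := by
        refine h1.trans (hTop.trans_eq ?_)
        rw [hR]; field_simp; norm_num
      exact le_of_mul_le_mul_right h2 hR0
    obtain ⟨X, hXW, hXc, hX⟩ := hcells (Fin n) {k // K ≤ l k} W1 φ hScard (by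
      intro i hi k
      refine le_trans ?_ (Finset.mem_filter.1 hi).2.2
      rw [hPφ, sq]
      exact Finset.single_le_sum (f := fun k => φ i k * φ i k) (fun k _ => mul_self_nonneg _)
        (Finset.mem_univ k))
    have hPX : ∀ i ∈ X, ∀ j ∈ X, 1.005 ≤ P i j := by
      intro i hi j hj
      have h1 := hX i hi j hj
      have e : ∑ k, (φ i k - φ j k) ^ 2 = P i i + P j j - 2 * P i j := by
        rw [hPφ, hPφ, hPφ, Finset.mul_sum, ← Finset.sum_add_distrib, ← Finset.sum_sub_distrib]
        refine Finset.sum_congr rfl fun k _ => ?_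
        ring
      rw [e] at h1
      have h2 := (Finset.mem_filter.1 (hXW hi)).2.1
      have h3 := (Finset.mem_filter.1 (hXW hj)).2.1
      norm_num at h1 h2 h3 ⊢
      linarith
    have hXd : (X.card : ℝ) ≤ 200 * d := by
      have h1 := hBP (fun i => if i ∈ X then 1 else 0)
      have e1 : ∑ i, ((if i ∈ X then (1 : ℝ) else 0)) ^ 2 = X.card := by
        simp
      have e2 : ∑ i, ∑ j, (A i j - P i j) * (if i ∈ X then (1 : ℝ) else 0) *
          (if j ∈ X then (1 : ℝ) else 0) ≤ ∑ i, ∑ j, (-0.005) * (if i ∈ X then (1 : ℝ) else 0) *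
          (if j ∈ X then (1 : ℝ) else 0) := by
        apply Finset.sum_le_sum; intro i _; apply Finset.sum_le_sum; intro j _
        by_cases hi : i ∈ X
        · by_cases hj : j ∈ X
          · have := hPX i hi j hj
            simp only [hi, hj, if_true, mul_one]
            norm_num at this ⊢
            rcases h01 i j with h | h <;> rw [h] <;> linarith
          · simp [hj]
        · simp [hi]
      have e3 : ∑ i, ∑ j, (-0.005 : ℝ) * (if i ∈ X then (1 : ℝ) else 0) *
          (if j ∈ X then (1 : ℝ) else 0) = -0.005 * X.card * X.card := by
        simp only [← Finset.mul_sum, ← Finset.sum_mul]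
        simp
      rw [e1] at h1
      rw [e3] at e2
      by_contra hcon
      push Not at hcon
      have : (0 : ℝ) < X.card := by linarith
      have e4 : 0 ≤ -0.005 * (X.card : ℝ) * X.card + d * X.card := by linarith [h1, e2]
      norm_num at e4
      nlinarith
    have hW1c : (W1.card : ℝ) ≤ a / 2 * n := by
      have hdd : d ≤ d ^ 2 := by nlinarith
      calc (W1.card : ℝ) ≤ N * X.card := hXc
        _ ≤ N * (200 * (a / (400 * N) * n)) := by
          gcongr
          linarith
        _ = a / 2 * n := by field_simp; norm_num
    have hc := (Finset.card_le_card hsub).trans (Finset.card_union_le _ _)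
    calc _ ≤ _ := (Nat.cast_le (α := ℝ)).2 hc
      _ ≤ a * n := by push_cast; linarith
  · have e1 : ∑ i, ∑ j, (A i j - P i j) ^ 2 = ∑ i, (l - topF l K) i ^ 2 := by
      rw [← aux_pm_frob U hU, ← hAP]; rfl
    have e2 : ∑ i, (l - topF l K) i ^ 2 = ∑ i, (if l i < K then l i ^ 2 else 0) := by
      refine Finset.sum_congr rfl fun i _ => ?_
      simp only [Pi.sub_apply, topF]
      by_cases h : K ≤ l i
      · simp [h, not_lt.2 h]
      · simp [h, not_le.1 h]
    rw [e1, e2]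
    refine htail.trans ?_
    have h1 : 36 * (n : ℝ) ^ 2 / 8 ^ J ≤ γ / 2 * n ^ 2 := by
      rw [div_le_iff₀ (by positivity)]
      rw [div_lt_iff₀ hγ] at hJ
      have : (0 : ℝ) < (n : ℝ) ^ 2 := by positivity
      nlinarith
    have h2 : n * d ^ 2 ≤ γ / 2 * (n : ℝ) ^ 2 := by nlinarith
    linarith

lemma aux_cherry {n : ℕ} (P : Matrix (Fin n) (Fin n) ℝ) (hP : P.PosSemidef) (c x y : Fin n)
    (hc : P c c ≤ 1.01) (hx : P x x ≤ 1.01) (hy : P y y ≤ 1.01)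
    (hcx : 0.9 ≤ P c x) (hcy : 0.9 ≤ P c y) (hxy : P x y ≤ 0.1) : False := by
  obtain ⟨hs, hq⟩ := (aux_psd_iff P).1 hP
  have h := hq (Pi.single x 1 + Pi.single y 1 + (-1.4 : ℝ) • Pi.single c 1)
  have e : ∑ a, ∑ b, P a b * (Pi.single x 1 + Pi.single y 1 + (-1.4 : ℝ) • Pi.single c 1 : Fin n → ℝ) a *
      (Pi.single x 1 + Pi.single y 1 + (-1.4 : ℝ) • Pi.single c 1 : Fin n → ℝ) b =
      P x x + P y y + P x y + P y x - 1.4 * (P x c + P c x + P y c + P c y) + 1.96 * P c c := by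
    simp only [Pi.add_apply, Pi.smul_apply, smul_eq_mul, mul_add, add_mul, Finset.sum_add_distrib,
      Pi.single_apply]
    simp
    ring
  rw [e, hs y x, hs x c, hs y c] at h
  norm_num at *
  linarith

open scoped Classical in
lemma aux_edit {n : ℕ} (hn : 0 < n) (G : SimpleGraph (Fin n)) (a γ : ℝ) (ha : 0 < a) (ha1 : a ≤ 1)
    (hγ : 0 < γ) (hγa : γ ≤ a ^ 3 / 400)
    (P : Matrix (Fin n) (Fin n) ℝ) (hP : P.PosSemidef)
    (h1 : ((Finset.univ.filter fun i => 1.01 < P i i).card : ℝ) ≤ a * n)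
    (h2 : ∑ i, ∑ j, (adjMat G i j - P i j) ^ 2 ≤ γ * n ^ 2) :
    ∃ g : Fin n → Fin n,
      (((Finset.univ : Finset (Fin n × Fin n)).filter
        fun p => p.1 ≠ p.2 ∧ ¬ (G.Adj p.1 p.2 ↔ g p.1 = g p.2)).card : ℝ) ≤ 6 * a * n ^ 2 := by
  have hn' : (0 : ℝ) < n := by exact_mod_cast hn
  set bp : Fin n → Fin n → Prop := fun i j => 0.1 < |adjMat G i j - P i j| with hbp
  set Bp := (Finset.univ : Finset (Fin n × Fin n)).filter (fun p => bp p.1 p.2) with hBp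
  have hBpc : (Bp.card : ℝ) ≤ 100 * γ * n ^ 2 := by
    have : (Bp.card : ℝ) * 0.01 ≤ ∑ p : Fin n × Fin n, (adjMat G p.1 p.2 - P p.1 p.2) ^ 2 := by
      calc (Bp.card : ℝ) * 0.01 ≤ ∑ p ∈ Bp, (adjMat G p.1 p.2 - P p.1 p.2) ^ 2 := by
            rw [← nsmul_eq_mul]
            apply Finset.card_nsmul_le_sum
            intro p hp
            have := (Finset.mem_filter.1 hp).2
            simp only [hbp] at this
            have h5 := sq_abs (adjMat G p.1 p.2 - P p.1 p.2)
            rw [← h5]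
            generalize |adjMat G p.1 p.2 - P p.1 p.2| = y at this ⊢
            norm_num at this ⊢
            nlinarith
        _ ≤ _ := Finset.sum_le_sum_of_subset_of_nonneg (Finset.subset_univ _)
            fun i _ _ => sq_nonneg _
    rw [Fintype.sum_prod_type] at this
    norm_num at this
    linarith
  set b : Fin n → Finset (Fin n) := fun u => Finset.univ.filter fun v => bp u v with hb
  have hbsum : ∑ u, ((b u).card : ℝ) = Bp.card := by
    have h3 : Bp.card = ∑ u, (b u).card := by
      simp only [hBp, hb, Finset.card_filter, Fintype.sum_prod_type]
    rw [h3]; push_cast; rfl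
  set VB := Finset.univ.filter (fun u => a ^ 2 / 4 * n < ((b u).card : ℝ)) with hVB
  have hVBc : (VB.card : ℝ) ≤ a * n := by
    have h3 : (VB.card : ℝ) * (a ^ 2 / 4 * n) ≤ Bp.card := by
      calc (VB.card : ℝ) * (a ^ 2 / 4 * n) ≤ ∑ u ∈ VB, ((b u).card : ℝ) := by
            rw [← nsmul_eq_mul]
            apply Finset.card_nsmul_le_sum
            intro i hi; exact (Finset.mem_filter.1 hi).2.le
        _ ≤ ∑ u, ((b u).card : ℝ) := Finset.sum_le_sum_of_subset_of_nonneg (Finset.subset_univ _)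
              fun i _ _ => by positivity
        _ = _ := hbsum
    have h4 : (VB.card : ℝ) * (a ^ 2 / 4 * n) ≤ (a * n) * (a ^ 2 / 4 * n) := by
      refine h3.trans (hBpc.trans ?_)
      calc 100 * γ * (n : ℝ) ^ 2 ≤ 100 * (a ^ 3 / 400) * n ^ 2 := by gcongr
        _ = _ := by ring
    exact le_of_mul_le_mul_right h4 (by positivity)
  set WB := Finset.univ.filter (fun i => 1.01 < P i i) with hWB
  set R0 := (WB ∪ VB)ᶜ with hR0
  have hR0W : ∀ u ∈ R0, P u u ≤ 1.01 ∧ ((b u).card : ℝ) ≤ a ^ 2 / 4 * n := by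
    intro u hu
    simp only [hR0, hWB, hVB, Finset.mem_compl, Finset.mem_union, Finset.mem_filter,
      Finset.mem_univ, true_and, not_or, not_lt] at hu
    exact hu
  have hR0c : ((R0ᶜ).card : ℝ) ≤ 2 * a * n := by
    rw [hR0, compl_compl]
    calc ((WB ∪ VB).card : ℝ) ≤ ((WB.card + VB.card : ℕ) : ℝ) := by
          exact_mod_cast Finset.card_union_le _ _
      _ ≤ _ := by push_cast; linarith
  have hsymP : ∀ i j, P i j = P j i := ((aux_psd_iff P).1 hP).1
  have hAdj : ∀ i j, ¬ bp i j → G.Adj i j → 0.9 ≤ P i j := by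
    intro i j h hadj
    simp only [hbp, not_lt, adjMat, Matrix.of_apply, hadj, if_true, abs_le] at h
    norm_num at h ⊢
    linarith [h.2]
  have hNAdj : ∀ i j, ¬ bp i j → ¬ G.Adj i j → P i j ≤ 0.1 := by
    intro i j h hadj
    simp only [hbp, not_lt, adjMat, Matrix.of_apply, hadj, if_false, abs_le] at h
    norm_num at h ⊢
    linarith [h.1]
  have htri : ∀ u ∈ R0, ∀ v ∈ R0, ∀ w ∈ R0, badTri G u v w → bp u v ∨ bp u w ∨ bp v w := by
    intro u hu v hv w hw hbad
    by_contra hcon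
    push Not at hcon
    obtain ⟨huv, huw, hvw⟩ := hcon
    have pu := (hR0W u hu).1
    have pv := (hR0W v hv).1
    have pw := (hR0W w hw).1
    obtain ⟨hne, h | h | h⟩ := hbad
    · obtain ⟨hv1, hw1, hnadj⟩ := h
      rcases hv1 with rfl | hv1
      · rcases hw1 with rfl | hw1
        · exact hne rfl
        · exact hnadj hw1
      · rcases hw1 with rfl | hw1
        · exact hnadj hv1.symm
        · exact aux_cherry P hP u v w pu pv pw (hAdj _ _ huv hv1) (hAdj _ _ huw hw1)
            (hNAdj _ _ hvw hnadj)
    · obtain ⟨hv1, hw1, hadj⟩ := h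
      simp only [clN, not_or] at hw1
      rcases hv1 with rfl | hv1
      · exact hw1.2 hadj
      · exact aux_cherry P hP v u w pv pu pw (hsymP u v ▸ hAdj _ _ huv hv1) (hAdj _ _ hvw hadj)
          (hNAdj _ _ huw hw1.2)
    · obtain ⟨hv1, hw1, hadj⟩ := h
      simp only [clN, not_or] at hv1
      rcases hw1 with rfl | hw1
      · exact hv1.2 hadj.symm
      · exact aux_cherry P hP w u v pw pu pv (hsymP u w ▸ hAdj _ _ huw hw1)
          (hsymP v w ▸ hAdj _ _ hvw hadj) (hNAdj _ _ huv hv1.2)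
  have hκ : ∀ u ∈ R0, (((R0 ×ˢ R0).filter fun p => badTri G u p.1 p.2).card : ℝ)
      ≤ a ^ 2 * n ^ 2 := by
    intro u hu
    have hsub : ((R0 ×ˢ R0).filter fun p => badTri G u p.1 p.2) ⊆
        (b u ×ˢ Finset.univ) ∪ ((Finset.univ ×ˢ b u) ∪ Bp) := by
      rintro ⟨v, w⟩ hp
      simp only [Finset.mem_filter, Finset.mem_product] at hp
      have := htri u hu v hp.1.1 w hp.1.2 hp.2
      simpa [hb, hBp] using this
    have hc : ((R0 ×ˢ R0).filter fun p => badTri G u p.1 p.2).card ≤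
        (b u).card * n + (n * (b u).card + Bp.card) := by
      refine (Finset.card_le_card hsub).trans ((Finset.card_union_le _ _).trans ?_)
      refine add_le_add (by simp) ((Finset.card_union_le _ _).trans ?_)
      simp
    have hbu := (hR0W u hu).2
    calc _ ≤ _ := (Nat.cast_le (α := ℝ)).2 hc
      _ = 2 * (b u).card * n + Bp.card := by push_cast; ring
      _ ≤ 2 * (a ^ 2 / 4 * n) * n + 100 * (a ^ 3 / 400) * n ^ 2 := by
          gcongr
          refine hBpc.trans ?_
          gcongr
      _ = (a ^ 2 / 2 + a ^ 2 * a / 4) * n ^ 2 := by ring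
      _ ≤ a ^ 2 * n ^ 2 := by
          gcongr
          nlinarith [sq_nonneg a]
  obtain ⟨g, hg, hgc⟩ := aux_cluster G (a * n) (a ^ 2 * n ^ 2) (by positivity) (by positivity) R0 hκ
    R0.card R0 le_rfl (Finset.Subset.refl _)
  refine ⟨g, ?_⟩
  have hsub : ((Finset.univ : Finset (Fin n × Fin n)).filter
        fun p => p.1 ≠ p.2 ∧ ¬ (G.Adj p.1 p.2 ↔ g p.1 = g p.2)) ⊆
      ((R0 ×ˢ R0).filter fun p => p.1 ≠ p.2 ∧ ¬ (G.Adj p.1 p.2 ↔ g p.1 = g p.2)) ∪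
      ((R0ᶜ ×ˢ Finset.univ) ∪ (Finset.univ ×ˢ R0ᶜ)) := by
    rintro ⟨v, w⟩ hp
    simp only [Finset.mem_filter, Finset.mem_univ, true_and, Finset.mem_union, Finset.mem_product,
      Finset.mem_compl, and_true] at hp ⊢
    by_cases hv : v ∈ R0
    · by_cases hw : w ∈ R0
      · exact Or.inl ⟨⟨hv, hw⟩, hp⟩
      · exact Or.inr (Or.inr hw)
    · exact Or.inr (Or.inl hv)
  have hc : ((Finset.univ : Finset (Fin n × Fin n)).filter
        fun p => p.1 ≠ p.2 ∧ ¬ (G.Adj p.1 p.2 ↔ g p.1 = g p.2)).card ≤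
      ((R0 ×ˢ R0).filter fun p => p.1 ≠ p.2 ∧ ¬ (G.Adj p.1 p.2 ↔ g p.1 = g p.2)).card +
      ((R0ᶜ).card * n + n * (R0ᶜ).card) := by
    refine (Finset.card_le_card hsub).trans ((Finset.card_union_le _ _).trans ?_)
    gcongr
    refine (Finset.card_union_le _ _).trans ?_
    rw [Finset.card_product, Finset.card_product, Finset.card_univ, Fintype.card_fin]
  have hR0n : (R0.card : ℝ) ≤ n := by
    have := Finset.card_le_univ R0
    rw [Fintype.card_fin] at this
    exact_mod_cast this
  have hcost : (a * n + a ^ 2 * n ^ 2 / (a * n)) * R0.card ≤ 2 * a * n * n := by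
    have : a * n + a ^ 2 * n ^ 2 / (a * n) = 2 * a * n := by field_simp; ring
    rw [this]; gcongr
  calc _ ≤ _ := (Nat.cast_le (α := ℝ)).2 hc
    _ ≤ 2 * a * n * n + (2 * a * n * n + n * (2 * a * n)) := by
      push_cast
      gcongr
      exact hgc.trans hcost
    _ = _ := by ring
/-- the union of cliques given by a labelling -/
def labG {n : ℕ} (g : Fin n → Fin n) : SimpleGraph (Fin n) where
  Adj v w := v ≠ w ∧ g v = g w
  symm := ⟨fun _ _ h => ⟨h.1.symm, h.2.symm⟩⟩
  loopless := ⟨fun _ h => h.1 rfl⟩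

lemma aux_labG {n : ℕ} (g : Fin n → Fin n) : IsUnionOfCliques (labG g) := by
  intro u v h hne
  refine ⟨hne, ?_⟩
  obtain ⟨p⟩ := h
  clear hne
  induction p with
  | nil => rfl
  | cons h _ ih => exact h.2.trans ih

/-- delete edges outside `U` -/
def resG {n : ℕ} (G : SimpleGraph (Fin n)) (U : Finset (Fin n)) : SimpleGraph (Fin n) where
  Adj v w := G.Adj v w ∧ v ∈ U ∧ w ∈ U
  symm := ⟨fun _ _ h => ⟨h.1.symm, h.2.2, h.2.1⟩⟩
  loopless := ⟨fun v h => G.loopless.irrefl v h.1⟩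

open scoped Classical in
lemma aux_symmDiff {n : ℕ} (G H : SimpleGraph (Fin n)) :
    (symmDiff G.edgeSet H.edgeSet).ncard ≤
      ((Finset.univ : Finset (Fin n × Fin n)).filter
        fun p => p.1 ≠ p.2 ∧ ¬ (G.Adj p.1 p.2 ↔ H.Adj p.1 p.2)).card := by
  have hsub : symmDiff G.edgeSet H.edgeSet ⊆
      ((((Finset.univ : Finset (Fin n × Fin n)).filter
        fun p => p.1 ≠ p.2 ∧ ¬ (G.Adj p.1 p.2 ↔ H.Adj p.1 p.2)).image fun p => s(p.1, p.2) :
          Finset (Sym2 (Fin n))) : Set (Sym2 (Fin n))) := by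
    intro e he
    induction e with
    | h x y =>
      rw [Set.mem_symmDiff] at he
      simp only [SimpleGraph.mem_edgeSet] at he
      rw [Finset.mem_coe, Finset.mem_image]
      refine ⟨(x, y), ?_, rfl⟩
      simp only [Finset.mem_filter, Finset.mem_univ, true_and]
      rcases he with ⟨h1, h2⟩ | ⟨h1, h2⟩
      · exact ⟨h1.ne, by tauto⟩
      · exact ⟨h1.ne, by tauto⟩
  refine (Set.ncard_le_ncard hsub (Finset.finite_toSet _)).trans ?_
  rw [Set.ncard_coe_finset]
  exact Finset.card_image_le

open scoped Classical in
lemma aux_final {n : ℕ} (G : SimpleGraph (Fin n)) (U : Finset (Fin n)) (g : Fin n → Fin n) :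
    ((Finset.univ : Finset (Fin n × Fin n)).filter
        fun p => p.1 ≠ p.2 ∧ ¬ (G.Adj p.1 p.2 ↔ (labG g).Adj p.1 p.2)).card ≤
    ((Finset.univ : Finset (Fin n × Fin n)).filter
        fun p => p.1 ≠ p.2 ∧ ¬ ((resG G U).Adj p.1 p.2 ↔ g p.1 = g p.2)).card +
      ((Uᶜ).card * n + n * (Uᶜ).card) := by
  have hsub : ((Finset.univ : Finset (Fin n × Fin n)).filter
        fun p => p.1 ≠ p.2 ∧ ¬ (G.Adj p.1 p.2 ↔ (labG g).Adj p.1 p.2)) ⊆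
      ((Finset.univ : Finset (Fin n × Fin n)).filter
        fun p => p.1 ≠ p.2 ∧ ¬ ((resG G U).Adj p.1 p.2 ↔ g p.1 = g p.2)) ∪
      ((Uᶜ ×ˢ Finset.univ) ∪ (Finset.univ ×ˢ Uᶜ)) := by
    rintro ⟨v, w⟩ hp
    simp only [Finset.mem_filter, Finset.mem_univ, true_and, Finset.mem_union, Finset.mem_product,
      Finset.mem_compl, and_true] at hp ⊢
    have k1 : (labG g).Adj v w ↔ v ≠ w ∧ g v = g w := Iff.rfl
    have k2 : (resG G U).Adj v w ↔ G.Adj v w ∧ v ∈ U ∧ w ∈ U := Iff.rfl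
    rw [k1] at hp
    rw [k2]
    tauto
  refine (Finset.card_le_card hsub).trans ((Finset.card_union_le _ _).trans ?_)
  gcongr
  refine (Finset.card_union_le _ _).trans ?_
  rw [Finset.card_product, Finset.card_product, Finset.card_univ, Fintype.card_fin]

lemma aux_resG_psd {n : ℕ} (G : SimpleGraph (Fin n)) (U : Finset (Fin n)) (d : ℝ) (hd : 0 ≤ d)
    (h : ∀ x : Fin n → ℝ, (∀ i, i ∉ U → x i = 0) →
        0 ≤ ∑ i, ∑ j, adjMat G i j * x i * x j + d * ∑ i, x i ^ 2) (x : Fin n → ℝ) :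
    0 ≤ ∑ i, ∑ j, adjMat (resG G U) i j * x i * x j + d * ∑ i, x i ^ 2 := by
  classical
  have h1 := h (fun i => if i ∈ U then x i else 0) (by intro i hi; simp [hi])
  refine h1.trans (add_le_add (le_of_eq ?_) ?_)
  · refine Finset.sum_congr rfl fun i _ => Finset.sum_congr rfl fun j _ => ?_
    simp only [adjMat, Matrix.of_apply, resG]
    by_cases hi : i ∈ U <;> by_cases hj : j ∈ U <;> simp [hi, hj]
  · refine mul_le_mul_of_nonneg_left (Finset.sum_le_sum fun i _ => ?_) hd
    by_cases hi : i ∈ U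
    · simp [hi]
    · simp [hi, sq_nonneg]


-- If `G` is `ε`-far from every disjoint union of cliques, then
-- `sp*(G) ≥ (1/2) n ^ (1 + 1/99)`.
theorem stmt13 (ε : ℝ) (hε : 0 < ε) :
    ∃ n₀ : ℕ, ∀ (n : ℕ), n₀ ≤ n →
      ∀ G : SimpleGraph (Fin n),
        FarFromCliqueUnions ε G →
        (1 / 2) * (n : ℝ) ^ ((1 : ℝ) + 1 / 99) ≤ spStar G := by
  set a : ℝ := min ε 1 / 8 with ha
  have ha0 : 0 < a := by positivity
  have ha1 : a ≤ 1 := by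
    have := min_le_right ε 1
    rw [ha]; linarith
  have haε : 8 * a ≤ ε := by
    have := min_le_left ε 1
    rw [ha]; linarith
  set γ : ℝ := a ^ 3 / 400 with hγ
  have hγ0 : 0 < γ := by positivity
  obtain ⟨ζ, hζ, hP⟩ := aux_P a γ ha0 hγ0
  have ev1 : ∀ᶠ n : ℕ in Filter.atTop, (n : ℝ) ^ (-(1 / 20 - 1 / 99) : ℝ) ≤ a :=
    ((tendsto_rpow_neg_atTop (by norm_num)).comp tendsto_natCast_atTop_atTop).eventually
      (ge_mem_nhds ha0)
  have ev2 : ∀ᶠ n : ℕ in Filter.atTop, (n : ℝ) ^ (-(9 / 10) : ℝ) ≤ ζ :=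
    ((tendsto_rpow_neg_atTop (by norm_num)).comp tendsto_natCast_atTop_atTop).eventually
      (ge_mem_nhds hζ)
  obtain ⟨n₀, hn₀⟩ := Filter.eventually_atTop.1 (ev1.and (ev2.and (Filter.eventually_ge_atTop 1)))
  refine ⟨n₀, fun n hn G hfar => ?_⟩
  obtain ⟨he1, he2, hn1⟩ := hn₀ n hn
  have hn0 : (0 : ℝ) < n := by exact_mod_cast hn1
  have hn1' : (1 : ℝ) ≤ n := by exact_mod_cast hn1
  by_contra hcon
  push Not at hcon
  set d : ℝ := (n : ℝ) ^ (1 / 20 : ℝ) with hd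
  have hd1 : 1 ≤ d := Real.one_le_rpow hn1' (by norm_num)
  have hd10 : d ^ 10 ≤ n := by
    rw [hd, ← Real.rpow_natCast, ← Real.rpow_mul hn0.le]
    calc (n : ℝ) ^ ((1 / 20 : ℝ) * (10 : ℕ)) ≤ (n : ℝ) ^ (1 : ℝ) :=
          Real.rpow_le_rpow_of_exponent_le hn1' (by norm_num)
      _ = n := Real.rpow_one _
  have hd2 : d ^ 2 ≤ ζ * n := by
    have : d ^ 2 = (n : ℝ) ^ (-(9 / 10) : ℝ) * n := by
      rw [hd, ← Real.rpow_natCast, ← Real.rpow_mul hn0.le]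
      nth_rewrite 3 [← Real.rpow_one (n : ℝ)]
      rw [← Real.rpow_add hn0]
      norm_num
    rw [this]; gcongr
  obtain ⟨U, hU, hUx⟩ := aux_sdp G d (by linarith)
  have hUc : ((Uᶜ).card : ℝ) ≤ a * n := by
    have h1 : d * (Uᶜ).card ≤ d * (a * n) := by
      calc d * (Uᶜ).card ≤ (n : ℝ) ^ ((1 : ℝ) + 1 / 99) := by linarith
        _ = d * ((n : ℝ) ^ (-(1 / 20 - 1 / 99) : ℝ) * n) := by
          rw [hd]
          nth_rewrite 4 [← Real.rpow_one (n : ℝ)]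
          rw [← Real.rpow_add hn0, ← Real.rpow_add hn0]
          norm_num
        _ ≤ d * (a * n) := by gcongr
    exact le_of_mul_le_mul_left h1 (by linarith)
  have hx := aux_resG_psd G U d (by linarith) hUx
  obtain ⟨P, hPp, hPd, hPf⟩ := hP n d hn1 hd1 hd10 hd2 (adjMat (resG G U)) (aux_adj_bound _)
    (fun i => by simp [adjMat]) (fun i j => by
      have hs := SimpleGraph.adj_comm (resG G U) i j
      simp only [adjMat, Matrix.of_apply]
      by_cases h : (resG G U).Adj i j
      · rw [if_pos h, if_pos (hs.1 h)]
      · rw [if_neg h, if_neg (fun h' => h (hs.2 h'))]) hx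
  obtain ⟨g, hg⟩ := aux_edit hn1 (resG G U) a γ ha0 ha1 hγ0 le_rfl P hPp hPd hPf
  apply hfar (labG g) (aux_labG g)
  refine ⟨labG g, ⟨SimpleGraph.Iso.refl⟩, ?_⟩
  have hc := (aux_symmDiff G (labG g)).trans (aux_final G U g)
  calc _ ≤ _ := (Nat.cast_le (α := ℝ)).2 hc
    _ ≤ 6 * a * n ^ 2 + (a * n * n + n * (a * n)) := by
      push_cast
      gcongr
    _ = 8 * a * n ^ 2 := by ring
    _ ≤ ε * n ^ 2 := by gcongr
end

section
/- Let γ = 1/200. There exists n₀ such that the following holds: if G₀ is a graph on n₀' ≥ n₀ vertices with edge density p(G₀) ≥ (n₀')^(−γ) and sp*(G₀) ≤ (1/2)(n₀')^(1+γ), then at least one of the following holds: (1) G₀ contains an induced subgraph G₁ on at least n₀'/8 vertices with p(G₁) ≥ 2 p(G₀); (2) G₀ contains an induced subgraph G₁ on at least p(G₀) · n₀' vertices with p(G₁) ≥ 10^(−10) √(p(G₀)). -/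
-- The edge density `p(G) = 2 m / n ^ 2`.
noncomputable def density {V : Type*} [Fintype V] (G : SimpleGraph V) : ℝ :=
  2 * (G.edgeSet.ncard : ℝ) / (Fintype.card V : ℝ) ^ 2


def qf {V : Type*} [Fintype V] (M : Matrix V V ℝ) (x : V → ℝ) : ℝ :=
  ∑ i, ∑ j, M i j * (x i * x j)

def ON {κ V : Type*} [DecidableEq κ] [Fintype V] (w : κ → V → ℝ) : Prop :=
  ∀ k l, ∑ i, w k i * w l i = if k = l then 1 else 0

lemma qf_psd {V : Type*} [Fintype V] {M : Matrix V V ℝ} (h : M.PosSemidef) (x : V → ℝ) :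
    0 ≤ qf M x := by
  have := h.dotProduct_mulVec_nonneg x
  simp only [dotProduct, Matrix.mulVec, Finset.mul_sum, star_trivial] at this
  unfold qf
  refine le_of_le_of_eq this ?_
  exact Finset.sum_congr rfl fun i _ => Finset.sum_congr rfl fun j _ => by ring

lemma psd_of_qf {V : Type*} [Fintype V] {M : Matrix V V ℝ} (hs : ∀ i j, M i j = M j i)
    (h : ∀ x, 0 ≤ qf M x) : M.PosSemidef := by
  apply Matrix.PosSemidef.of_dotProduct_mulVec_nonneg
  · ext i j; simp [hs i j]
  · intro x
    have := h x
    simp only [dotProduct, Matrix.mulVec, Finset.mul_sum, star_trivial]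
    unfold qf at this
    refine le_of_le_of_eq this ?_
    exact Finset.sum_congr rfl fun i _ => Finset.sum_congr rfl fun j _ => by ring

lemma qf_add {V : Type*} [Fintype V] (M N : Matrix V V ℝ) (x : V → ℝ) :
    qf (M + N) x = qf M x + qf N x := by
  simp [qf, add_mul, Finset.sum_add_distrib]

lemma qf_sub {V : Type*} [Fintype V] (M N : Matrix V V ℝ) (x : V → ℝ) :
    qf (M - N) x = qf M x - qf N x := by
  simp [qf, sub_mul, Finset.sum_sub_distrib]

/-- Frobenius Cauchy-Schwarz. -/
lemma frob_cs {V : Type*} [Fintype V] (M N : V → V → ℝ) {a b : ℝ} (ha : 0 ≤ a) (hb : 0 ≤ b)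
    (hM : ∑ i, ∑ j, M i j ^ 2 ≤ a ^ 2) (hN : ∑ i, ∑ j, N i j ^ 2 ≤ b ^ 2) :
    |∑ i, ∑ j, M i j * N i j| ≤ a * b := by
  apply abs_le_of_sq_le_sq _ (by positivity)
  have h := Finset.sum_mul_sq_le_sq_mul_sq (Finset.univ : Finset (V × V))
    (fun q => M q.1 q.2) (fun q => N q.1 q.2)
  simp only [Fintype.sum_prod_type] at h
  refine h.trans ?_
  rw [mul_pow]
  exact mul_le_mul hM hN (by positivity) (by positivity)

lemma qf_le_frob {V : Type*} [Fintype V] (M : Matrix V V ℝ) (x : V → ℝ) {a b : ℝ} (ha : 0 ≤ a)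
    (hb : 0 ≤ b)
    (hM : ∑ i, ∑ j, M i j ^ 2 ≤ a ^ 2) (hx : ∑ i, x i ^ 2 ≤ b) : |qf M x| ≤ a * b := by
  refine frob_cs M (fun i j => x i * x j) ha hb hM ?_
  have : ∑ i, ∑ j, (x i * x j) ^ 2 = (∑ i, x i ^ 2) * ∑ j, x j ^ 2 := by
    rw [Finset.sum_mul_sum]; simp [mul_pow]
  rw [this, sq]
  exact mul_le_mul hx hx (by positivity) hb

lemma ON.bessel {κ V : Type*} [DecidableEq κ] [Fintype κ] [Fintype V] {w : κ → V → ℝ} (h : ON w)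
    (x : V → ℝ) : ∑ k, (∑ i, w k i * x i) ^ 2 ≤ ∑ i, x i ^ 2 := by
  set c : κ → ℝ := fun k => ∑ i, w k i * x i with hc
  have h0 : 0 ≤ ∑ i, (x i - ∑ k, c k * w k i) ^ 2 := by positivity
  have h1 : ∑ i, x i * ∑ k, c k * w k i = ∑ k, c k ^ 2 := by
    simp_rw [Finset.mul_sum]
    rw [Finset.sum_comm]
    refine Finset.sum_congr rfl fun k _ => ?_
    rw [sq]; nth_rw 3 [hc]
    simp only [Finset.mul_sum]
    exact Finset.sum_congr rfl fun i _ => by ring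
  have h2 : ∑ i, (∑ k, c k * w k i) ^ 2 = ∑ k, c k ^ 2 := by
    simp_rw [sq, Finset.sum_mul_sum]
    rw [Finset.sum_comm]
    refine Finset.sum_congr rfl fun k _ => ?_
    rw [Finset.sum_comm]
    have : ∀ l, ∑ i, c k * w k i * (c l * w l i) = c k * c l * (if k = l then 1 else 0) := by
      intro l; rw [← h k l, Finset.mul_sum]
      exact Finset.sum_congr rfl fun i _ => by ring
    simp [this]
  have h3 : ∑ i, (x i - ∑ k, c k * w k i) ^ 2 = ∑ i, x i ^ 2 - 2 * (∑ i, x i * ∑ k, c k * w k i)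
      + ∑ i, (∑ k, c k * w k i) ^ 2 := by
    rw [Finset.mul_sum, ← Finset.sum_sub_distrib, ← Finset.sum_add_distrib]
    exact Finset.sum_congr rfl fun i _ => by ring
  linarith

lemma exists_ON_span {κ V : Type*} [Fintype κ] [Fintype V] (g : κ → V → ℝ) :
    ∃ (R : ℕ) (w : Fin R → V → ℝ), R ≤ Fintype.card κ ∧ ON w ∧
      ∀ k, ∑ m, (∑ i, w m i * g k i) ^ 2 = ∑ i, g k i ^ 2 := by
  classical
  let g' : κ → EuclideanSpace ℝ V := fun k => WithLp.toLp 2 (g k)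
  let W := Submodule.span ℝ (Set.range g')
  let b := stdOrthonormalBasis ℝ W
  refine ⟨Module.finrank ℝ W, fun m i => (b m : EuclideanSpace ℝ V) i, ?_, ?_, ?_⟩
  · exact finrank_range_le_card g'
  · intro k l
    have := orthonormal_iff_ite.1 b.orthonormal l k
    rw [Submodule.coe_inner, PiLp.inner_apply] at this
    simp only [RCLike.inner_apply, conj_trivial] at this
    rw [this]
    simp [eq_comm]
  · intro k
    let y : W := ⟨g' k, Submodule.subset_span ⟨k, rfl⟩⟩
    have h := b.sum_sq_norm_inner_right y
    have h2 : ‖y‖ ^ 2 = ∑ i, g k i ^ 2 := by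
      change ‖g' k‖ ^ 2 = _
      rw [EuclideanSpace.norm_sq_eq]; simp [g']
    rw [← h2, ← h]
    refine Finset.sum_congr rfl fun m _ => ?_
    rw [Submodule.coe_inner, PiLp.inner_apply]
    simp only [RCLike.inner_apply, conj_trivial, Real.norm_eq_abs, sq_abs]
    congr 1
    exact Finset.sum_congr rfl fun i _ => by simp [y, g', mul_comm]

lemma exists_spec {V : Type*} [Fintype V] [DecidableEq V] (A : Matrix V V ℝ)
    (hA : A.IsHermitian) :
    ∃ u : V → V → ℝ, ON u ∧ (∀ i j, ∑ k, u k i * u k j = if i = j then 1 else 0) ∧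
      ∀ i j, A i j = ∑ k, hA.eigenvalues k * (u k i * u k j) := by
  refine ⟨fun k i => hA.eigenvectorUnitary.1 i k, ?_, ?_, ?_⟩
  · intro k l
    have := congrFun (congrFun (Unitary.coe_star_mul_self hA.eigenvectorUnitary) k) l
    simpa [Matrix.mul_apply, Matrix.one_apply] using this
  · intro k l
    have := congrFun (congrFun (Unitary.coe_mul_star_self hA.eigenvectorUnitary) k) l
    simpa [Matrix.mul_apply, Matrix.one_apply] using this
  · intro i j
    have := congrFun (congrFun hA.spectral_theorem i) j
    rw [Unitary.conjStarAlgAut_apply] at this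
    rw [this, Matrix.mul_apply]
    refine Finset.sum_congr rfl fun k _ => ?_
    simp [Matrix.mul_diagonal]
    ring

def spec {V : Type*} [Fintype V] (u : V → V → ℝ) (c : V → ℝ) : Matrix V V ℝ :=
  Matrix.of fun i j => ∑ k, c k * (u k i * u k j)

lemma spec_symm {V : Type*} [Fintype V] (u : V → V → ℝ) (c : V → ℝ) (i j : V) :
    spec u c i j = spec u c j i := by
  simp only [spec, Matrix.of_apply]
  exact Finset.sum_congr rfl fun k _ => by ring

lemma spec_sub {V : Type*} [Fintype V] (u : V → V → ℝ) (c c' : V → ℝ) :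
    spec u c - spec u c' = spec u (fun k => c k - c' k) := by
  ext i j
  simp only [spec, Matrix.of_apply, Matrix.sub_apply, ← Finset.sum_sub_distrib]
  exact Finset.sum_congr rfl fun k _ => by ring

lemma qf_spec {V : Type*} [Fintype V] (u : V → V → ℝ) (c : V → ℝ) (x : V → ℝ) :
    qf (spec u c) x = ∑ k, c k * (∑ i, u k i * x i) ^ 2 := by
  simp only [qf, spec, Matrix.of_apply, Finset.sum_mul]
  have : ∀ k, c k * (∑ i, u k i * x i) ^ 2
      = ∑ i, ∑ j, c k * (u k i * u k j) * (x i * x j) := by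
    intro k
    rw [sq, Finset.sum_mul_sum, Finset.mul_sum]
    refine Finset.sum_congr rfl fun i _ => ?_
    rw [Finset.mul_sum]
    exact Finset.sum_congr rfl fun j _ => by ring
  simp_rw [this]
  symm
  rw [Finset.sum_comm]
  refine Finset.sum_congr rfl fun i _ => ?_
  rw [Finset.sum_comm]

lemma qf_spec_self {V : Type*} [Fintype V] [DecidableEq V] {u : V → V → ℝ} (hu : ON u)
    (c : V → ℝ) (l : V) : qf (spec u c) (u l) = c l := by
  have hu' : ∀ k l, ∑ i, u k i * u l i = if k = l then 1 else 0 := hu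
  rw [qf_spec]
  simp_rw [hu']
  simp

lemma spec_psd {V : Type*} [Fintype V] (u : V → V → ℝ) {c : V → ℝ} (hc : ∀ k, 0 ≤ c k) :
    (spec u c).PosSemidef := by
  apply psd_of_qf (spec_symm u c)
  intro x
  rw [qf_spec]
  exact Finset.sum_nonneg fun k _ => mul_nonneg (hc k) (sq_nonneg _)

lemma spec_trace {V : Type*} [Fintype V] [DecidableEq V] {u : V → V → ℝ} (hu : ON u) (c : V → ℝ) :
    ∑ i, spec u c i i = ∑ k, c k := by
  simp only [spec, Matrix.of_apply]
  rw [Finset.sum_comm]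
  refine Finset.sum_congr rfl fun k _ => ?_
  rw [← Finset.mul_sum, hu k k]; simp

lemma spec_row {V : Type*} [Fintype V] [DecidableEq V] {u : V → V → ℝ} (hu : ON u)
    (c c' : V → ℝ) (i : V) :
    ∑ j, spec u c i j * spec u c' i j = ∑ k, c k * c' k * u k i ^ 2 := by
  simp only [spec, Matrix.of_apply, Finset.sum_mul_sum]
  rw [Finset.sum_comm]
  refine Finset.sum_congr rfl fun k _ => ?_
  rw [Finset.sum_comm]
  have : ∀ l, ∑ j, c k * (u k i * u k j) * (c' l * (u l i * u l j))
      = c k * c' l * (u k i * u l i) * (if k = l then 1 else 0) := by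
    intro l; rw [← hu k l, Finset.mul_sum]
    exact Finset.sum_congr rfl fun i _ => by ring
  simp_rw [this]
  simp only [mul_ite, mul_one, mul_zero, Finset.sum_ite_eq, Finset.mem_univ, if_true]
  ring

lemma spec_frob {V : Type*} [Fintype V] [DecidableEq V] {u : V → V → ℝ} (hu : ON u)
    (c c' : V → ℝ) :
    ∑ i, ∑ j, spec u c i j * spec u c' i j = ∑ k, c k * c' k := by
  simp_rw [spec_row hu]
  rw [Finset.sum_comm]
  refine Finset.sum_congr rfl fun k _ => ?_
  rw [← Finset.mul_sum]
  have := hu k k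
  simp only [if_true, ← sq] at this
  rw [this, mul_one]

/-- negative part -/
lemma neg_part {V : Type*} [Fintype V] [DecidableEq V] (A : Matrix V V ℝ)
    (hA : A.IsHermitian) :
    ∃ N Q : Matrix V V ℝ, N.PosSemidef ∧ Q.PosSemidef ∧ (A + N).PosSemidef ∧
      (∀ i, Q i i ≤ 1) ∧ (∑ i, ∑ j, A i j * Q i j = - ∑ i, N i i) ∧
      (∑ i, ∑ j, A i j * N i j = - ∑ i, ∑ j, N i j ^ 2) ∧
      (∀ i, ∑ j, N i j ^ 2 ≤ ∑ j, A i j ^ 2) := by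
  obtain ⟨u, hu, hu2, hAu⟩ := exists_spec A hA
  set l := hA.eigenvalues
  have hAs : A = spec u l := by ext i j; exact hAu i j
  refine ⟨spec u (fun k => max (-l k) 0), spec u (fun k => if l k < 0 then 1 else 0),
    spec_psd u (by simp), spec_psd u (by intro k; split_ifs <;> simp), ?_, ?_, ?_, ?_, ?_⟩
  · have : A + spec u (fun k => max (-l k) 0) = spec u (fun k => max (l k) 0) := by
      rw [← eq_sub_iff_add_eq, spec_sub, hAs]
      congr 1; ext k
      rcases le_total 0 (l k) with h | h
      · rw [max_eq_left h, max_eq_right (by linarith)]; ring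
      · rw [max_eq_right h, max_eq_left (by linarith)]; ring
    rw [this]; exact spec_psd u (by simp)
  · intro i
    have h := hu2 i i
    simp only [if_true] at h
    refine le_of_le_of_eq ?_ h
    simp only [spec, Matrix.of_apply]
    refine Finset.sum_le_sum fun k _ => ?_
    by_cases h : l k < 0 <;> simp [h, mul_self_nonneg]
  · rw [spec_trace hu, hAs, spec_frob hu, ← Finset.sum_neg_distrib]
    refine Finset.sum_congr rfl fun k _ => ?_
    split_ifs with h
    · rw [max_eq_left (by linarith)]; ring
    · rw [max_eq_right (by linarith)]; ring
  · simp_rw [sq]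
    rw [hAs, spec_frob hu, spec_frob hu, ← Finset.sum_neg_distrib]
    refine Finset.sum_congr rfl fun k _ => ?_
    rcases le_total 0 (l k) with h | h
    · rw [max_eq_right (by linarith)]; ring
    · rw [max_eq_left (by linarith)]; ring
  · intro i
    simp_rw [sq]
    rw [hAs, spec_row hu, spec_row hu]
    refine Finset.sum_le_sum fun k _ => ?_
    apply mul_le_mul_of_nonneg_right _ (sq_nonneg _)
    rcases le_total 0 (l k) with h | h
    · rw [max_eq_right (by linarith)]; nlinarith
    · rw [max_eq_left (by linarith)]; nlinarith


def gram {κ V : Type*} [Fintype κ] (g : κ → V → ℝ) : Matrix V V ℝ :=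
  Matrix.of fun i j => ∑ k, g k i * g k j

lemma qf_gram {κ V : Type*} [Fintype κ] [Fintype V] (g : κ → V → ℝ) (x : V → ℝ) :
    qf (gram g) x = ∑ k, (∑ i, g k i * x i) ^ 2 := by
  simp only [qf, gram, Matrix.of_apply, Finset.sum_mul]
  simp_rw [sq, Finset.sum_mul_sum]
  symm
  rw [Finset.sum_comm]
  refine Finset.sum_congr rfl fun i _ => ?_
  rw [Finset.sum_comm]
  exact Finset.sum_congr rfl fun j _ => Finset.sum_congr rfl fun k _ => by ring

lemma gram_symm {κ V : Type*} [Fintype κ] (g : κ → V → ℝ) (i j : V) :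
    gram g i j = gram g j i := by
  simp only [gram, Matrix.of_apply]
  exact Finset.sum_congr rfl fun k _ => by ring

lemma gram_psd {κ V : Type*} [Fintype κ] [Fintype V] (g : κ → V → ℝ) : (gram g).PosSemidef := by
  apply psd_of_qf (gram_symm g)
  intro x; rw [qf_gram]; positivity

lemma psd_sqrt {V : Type*} [Fintype V] [DecidableEq V] {P : Matrix V V ℝ} (hP : P.PosSemidef) :
    ∃ B : V → V → ℝ, (∀ i j, B i j = B j i) ∧ P = gram B := by
  obtain ⟨u, hu, hu2, hPu⟩ := exists_spec P hP.1
  have hl := hP.eigenvalues_nonneg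
  set l := hP.1.eigenvalues
  refine ⟨spec u (fun k => Real.sqrt (l k)), spec_symm _ _, ?_⟩
  ext i j
  have key : ∀ a, spec u (fun k => Real.sqrt (l k)) a i * spec u (fun k => Real.sqrt (l k)) a j
    = ∑ k, ∑ m, √(l k) * √(l m) * (u k i * u m j) * (u k a * u m a) := by
    intro a
    simp only [spec, Matrix.of_apply, Finset.sum_mul_sum]
    exact Finset.sum_congr rfl fun k _ => Finset.sum_congr rfl fun m _ => by ring
  simp only [gram, Matrix.of_apply, key]
  rw [hPu, Finset.sum_comm]
  refine Finset.sum_congr rfl fun k _ => ?_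
  rw [Finset.sum_comm]
  have hu' : ∀ k l, ∑ i, u k i * u l i = if k = l then 1 else 0 := hu
  simp_rw [← Finset.mul_sum, hu']
  simp [Real.mul_self_sqrt (hl k)]

lemma psd_entry {V : Type*} [Fintype V] [DecidableEq V] {P : Matrix V V ℝ} (hP : P.PosSemidef)
    {d : ℝ} (hd : ∀ i, P i i ≤ d) (i j : V) : |P i j| ≤ d := by
  obtain ⟨B, -, rfl⟩ := psd_sqrt hP
  have h1 := hd i
  have h2 := hd j
  simp only [gram, Matrix.of_apply, ← sq] at h1 h2 ⊢
  have h3 := Finset.sum_mul_sq_le_sq_mul_sq Finset.univ (fun k => B k i) (fun k => B k j)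
  have h0 : 0 ≤ ∑ k, B k i ^ 2 := by positivity
  have h0' : 0 ≤ ∑ k, B k j ^ 2 := by positivity
  apply abs_le_of_sq_le_sq _ (by linarith)
  refine h3.trans ?_
  rw [sq]
  exact mul_le_mul h1 h2 h0' (by linarith)

lemma sum_qf_le_trace {κ V : Type*} [Fintype V] [DecidableEq V] [Fintype κ] [DecidableEq κ]
    {P : Matrix V V ℝ} (hP : P.PosSemidef) {w : κ → V → ℝ} (hw : ON w) :
    ∑ k, qf P (w k) ≤ ∑ i, P i i := by
  obtain ⟨B, -, rfl⟩ := psd_sqrt hP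
  simp_rw [qf_gram]
  rw [Finset.sum_comm]
  simp only [gram, Matrix.of_apply, ← sq]
  rw [Finset.sum_comm (f := fun i k => B k i ^ 2)]
  refine Finset.sum_le_sum fun a _ => ?_
  refine le_trans (le_of_eq ?_) (hw.bessel (B a))
  exact Finset.sum_congr rfl fun k _ => by congr 1; exact Finset.sum_congr rfl fun i _ => by ring

lemma hada_step {κ V : Type*} [Fintype V] [DecidableEq V] [Fintype κ] [DecidableEq κ]
    {P A : Matrix V V ℝ} (hP : P.PosSemidef) (hA : ∀ i j, A i j = 0 ∨ A i j = 1)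
    {d e : ℝ} (hd0 : 0 ≤ d) (he0 : 0 ≤ e) (hd : ∀ i, P i i ≤ d)
    (he : ∑ i, ∑ j, (P i j - A i j) ^ 2 ≤ e ^ 2)
    {w : κ → V → ℝ} (hw : ON w) :
    ∃ (R : ℕ) (w' : Fin R → V → ℝ), R ≤ Fintype.card κ ^ 2 ∧ ON w' ∧
      (∑ k, qf P (w k)) ^ 2 ≤
        Fintype.card V * (∑ m, qf P (w' m) + R * ((d + 2) * e)) := by
  have hent := psd_entry hP hd
  -- Frobenius bound on the defect
  have hF : ∑ i, ∑ j, (Matrix.hadamard P P - P) i j ^ 2 ≤ ((d + 2) * e) ^ 2 := by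
    rw [mul_pow]
    refine le_trans ?_ (mul_le_mul_of_nonneg_left he (by positivity))
    rw [Finset.mul_sum]
    refine Finset.sum_le_sum fun i _ => ?_
    rw [Finset.mul_sum]
    refine Finset.sum_le_sum fun j _ => ?_
    have h1 := abs_le.1 (hent i j)
    rw [← mul_pow]
    simp only [Matrix.sub_apply, Matrix.hadamard_apply]
    rcases hA i j with h | h
    · rw [h, sub_zero, show P i j * P i j - P i j = (P i j - 1) * P i j by ring, mul_pow, mul_pow]
      refine mul_le_mul_of_nonneg_right ?_ (sq_nonneg _)
      nlinarith
    · rw [h, show P i j * P i j - P i j = P i j * (P i j - 1) by ring, mul_pow, mul_pow]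
      refine mul_le_mul_of_nonneg_right ?_ (sq_nonneg _)
      nlinarith
  obtain ⟨B, hBs, hPB⟩ := psd_sqrt hP
  let h : κ → V → ℝ := fun k a => ∑ i, B a i * w k i
  have hq : ∀ k, qf P (w k) = ∑ a, h k a ^ 2 := by
    intro k; rw [hPB, qf_gram]
  let PI := gram h
  have hPI : PI.PosSemidef := gram_psd h
  have hsub : (P - PI).PosSemidef := by
    apply psd_of_qf
    · intro i j
      have e1 : PI i j = PI j i := gram_symm h i j
      have e2 : P i j = P j i := by rw [hPB]; exact gram_symm B i j
      rw [Matrix.sub_apply, Matrix.sub_apply, e1, e2]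
    · intro x
      rw [qf_sub, sub_nonneg, hPB, qf_gram, qf_gram]
      refine le_trans (le_of_eq ?_) (hw.bessel (fun a => ∑ i, B a i * x i))
      refine Finset.sum_congr rfl fun k _ => ?_
      congr 1
      simp only [h, Finset.sum_mul, Finset.mul_sum]
      rw [Finset.sum_comm]
      exact Finset.sum_congr rfl fun i _ => Finset.sum_congr rfl fun j _ => by
        rw [hBs i j]; ring
  obtain ⟨R, w', hR, hw', hspan⟩ := exists_ON_span (fun (q : κ × κ) i => h q.1 i * h q.2 i)
  refine ⟨R, w', by simpa [sq] using hR, hw', ?_⟩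
  have hdiff : ∀ x, qf (Matrix.hadamard PI PI) x ≤ qf (Matrix.hadamard P P) x := by
    intro x
    have h1 := qf_psd (hsub.hadamard hP) x
    have h2 := qf_psd (hPI.hadamard hsub) x
    have : Matrix.hadamard P P = Matrix.hadamard PI PI +
        (Matrix.hadamard (P - PI) P + Matrix.hadamard PI (P - PI)) := by
      ext i j; simp only [Matrix.hadamard_apply, Matrix.add_apply, Matrix.sub_apply]; ring
    rw [this, qf_add, qf_add]; linarith
  have hgram2 : Matrix.hadamard PI PI = gram (fun (q : κ × κ) i => h q.1 i * h q.2 i) := by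
    ext i j
    simp only [PI, gram, Matrix.of_apply, Matrix.hadamard_apply, Finset.sum_mul_sum,
      Fintype.sum_prod_type]
    exact Finset.sum_congr rfl fun i _ => Finset.sum_congr rfl fun j _ => by ring
  have htr : ∑ m, qf (Matrix.hadamard PI PI) (w' m) = ∑ i, (∑ k, h k i ^ 2) ^ 2 := by
    rw [hgram2]
    simp_rw [qf_gram]
    rw [Finset.sum_comm]
    have : ∀ q : κ × κ, ∑ m, (∑ i, h q.1 i * h q.2 i * w' m i) ^ 2
        = ∑ i, (h q.1 i * h q.2 i) ^ 2 := by
      intro q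
      rw [← hspan q]
      exact Finset.sum_congr rfl fun k _ => by
        congr 1; exact Finset.sum_congr rfl fun i _ => by ring
    simp_rw [this]
    rw [Finset.sum_comm]
    refine Finset.sum_congr rfl fun i _ => ?_
    rw [Fintype.sum_prod_type, sq, Finset.sum_mul_sum]
    exact Finset.sum_congr rfl fun i _ => Finset.sum_congr rfl fun j _ => by ring
  have hCS : (∑ k, qf P (w k)) ^ 2 ≤ Fintype.card V * ∑ i, (∑ k, h k i ^ 2) ^ 2 := by
    simp_rw [hq]
    rw [Finset.sum_comm]
    exact sq_sum_le_card_mul_sum_sq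
  refine hCS.trans (mul_le_mul_of_nonneg_left ?_ (by positivity))
  rw [← htr]
  have : ∀ m, qf (Matrix.hadamard PI PI) (w' m) ≤ qf P (w' m) + (d + 2) * e := by
    intro m
    have h1 := hdiff (w' m)
    have h2 := qf_le_frob (Matrix.hadamard P P - P) (w' m) (a := (d + 2) * e) (b := 1)
      (by positivity) (by positivity) hF (by
        have := hw' m m
        simp only [if_true, ← sq] at this
        rw [this])
    have h3 := (abs_le.1 h2).2
    rw [qf_sub] at h3
    linarith
  refine (Finset.sum_le_sum fun m _ => this m).trans (le_of_eq ?_)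
  rw [Finset.sum_add_distrib]; simp

/-- growth bound for partial traces -/
lemma growth {V : Type*} [Fintype V] [DecidableEq V]
    {P A : Matrix V V ℝ} (hP : P.PosSemidef) (hA : ∀ i j, A i j = 0 ∨ A i j = 1)
    {n d e t : ℝ} (hn : (Fintype.card V : ℝ) = n) (hd0 : 0 ≤ d) (he0 : 0 ≤ e)
    (hd : ∀ i, P i i ≤ d)
    (he : ∑ i, ∑ j, (P i j - A i j) ^ 2 ≤ e ^ 2) (htr : ∑ i, P i i ≤ n * t)
    (hen : e ≤ n) (herr : t ^ 8 * ((d + 2) * e) ≤ n) :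
    ∀ (s r : ℕ), 1 ≤ r → t ^ 4 ≤ r + s → ∀ (κ : Type) [Fintype κ] [DecidableEq κ]
      (w : κ → V → ℝ), ON w → Fintype.card κ ≤ r → (∑ k, qf P (w k)) ^ 4 ≤ 16 * n ^ 4 * r := by
  have hn0 : 0 ≤ n := by rw [← hn]; positivity
  intro s
  induction s using Nat.strong_induction_on with
  | _ s ih =>
  intro r hr hs κ _ _ w hw hcard
  have hr' : (1 : ℝ) ≤ r := by exact_mod_cast hr
  have hpos : 0 ≤ ∑ k, qf P (w k) := Finset.sum_nonneg fun k _ => qf_psd hP _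
  by_cases h1 : t ^ 4 ≤ r
  · have := (sum_qf_le_trace hP hw).trans htr
    have h2 := pow_le_pow_left₀ hpos this 4
    refine h2.trans ?_
    rw [mul_pow]
    have h4 : 0 ≤ n ^ 4 := by positivity
    nlinarith [mul_le_mul_of_nonneg_left h1 h4]
  push Not at h1
  by_cases h2 : r = 1
  · have hunit : ∀ k, qf P (w k) ≤ 2 * n := by
      intro k
      have hwk : ∑ i, w k i ^ 2 ≤ 1 := by
        have := hw k k
        simp only [if_true, ← sq] at this
        rw [this]
      have e1 := (abs_le.1 (qf_le_frob (P - A) (w k) he0 zero_le_one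
        (by simpa using he) hwk)).2
      have e2 := (abs_le.1 (qf_le_frob A (w k) hn0 zero_le_one (a := n) (by
        calc ∑ i, ∑ j, A i j ^ 2 ≤ ∑ i : V, ∑ j : V, (1 : ℝ) := by
              refine Finset.sum_le_sum fun i _ => Finset.sum_le_sum fun j _ => ?_
              rcases hA i j with h | h <;> simp [h]
          _ = n ^ 2 := by simp [← hn, sq]) hwk)).2
      rw [qf_sub] at e1
      linarith
    have : ∑ k, qf P (w k) ≤ 2 * n := by
      calc ∑ k, qf P (w k) ≤ ∑ k : κ, 2 * n := Finset.sum_le_sum fun k _ => hunit k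
        _ = Fintype.card κ * (2 * n) := by simp
        _ ≤ 1 * (2 * n) := by
            apply mul_le_mul_of_nonneg_right _ (by positivity)
            rw [h2] at hcard; exact_mod_cast hcard
        _ = 2 * n := one_mul _
    have h3 := pow_le_pow_left₀ hpos this 4
    rw [h2]; push_cast; linarith
  · have hr2 : 2 ≤ r := by omega
    obtain ⟨R, w', hR, hw', hst⟩ := hada_step hP hA hd0 he0 hd he hw
    have hRr : R ≤ r ^ 2 := hR.trans (Nat.pow_le_pow_left hcard 2)
    have hs0 : 0 < s := by
      rcases Nat.eq_zero_or_pos s with h | h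
      · subst h; simp at hs; linarith
      · exact h
    have hrr : r + 1 ≤ r ^ 2 := by nlinarith
    have hrr' : (r : ℝ) + 1 ≤ (r ^ 2 : ℕ) := by exact_mod_cast hrr
    have hrec := ih (s - 1) (by omega) (r ^ 2) (by omega)
      (by rw [Nat.cast_sub (by omega)]; push_cast at hrr' ⊢; linarith) (Fin R) w' hw' (by simpa using hRr)
    set x := ∑ k, qf P (w k)
    have hy0 : 0 ≤ ∑ m, qf P (w' m) := Finset.sum_nonneg fun k _ => qf_psd hP _
    set y := ∑ m, qf P (w' m)
    have hy : y ≤ 2 * n * √r := by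
      have : y ^ 4 ≤ (2 * n * √r) ^ 4 := by
        refine hrec.trans (le_of_eq ?_)
        have : √(r:ℝ) ^ 4 = r ^ 2 := by
          rw [show 4 = 2 * 2 by norm_num, pow_mul, Real.sq_sqrt (by positivity)]
        rw [mul_pow, mul_pow, this]; push_cast; ring
      exact le_of_pow_le_pow_left₀ (by norm_num) (by positivity) this
    have hRt : (R : ℝ) ≤ t ^ 8 := by
      calc (R : ℝ) ≤ (r : ℝ) ^ 2 := by exact_mod_cast hRr
        _ ≤ (t ^ 4) ^ 2 := pow_le_pow_left₀ (by positivity) h1.le 2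
        _ = t ^ 8 := by ring
    have hE : (R : ℝ) * ((d + 2) * e) ≤ n :=
      (mul_le_mul_of_nonneg_right hRt (by positivity)).trans herr
    have hsq : 1 ≤ √(r : ℝ) := Real.one_le_sqrt.2 hr'
    have hx2 : x ^ 2 ≤ 4 * n ^ 2 * √r := by
      rw [hn] at hst
      refine hst.trans ?_
      calc n * (y + R * ((d + 2) * e)) ≤ n * (2 * n * √r + n) :=
            mul_le_mul_of_nonneg_left (by linarith) hn0
        _ ≤ n * (2 * n * √r + n * (2 * √r)) := by
            apply mul_le_mul_of_nonneg_left _ hn0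
            have := mul_le_mul_of_nonneg_left hsq hn0
            linarith
        _ = 4 * n ^ 2 * √r := by ring
    calc x ^ 4 = (x ^ 2) ^ 2 := by ring
      _ ≤ (4 * n ^ 2 * √r) ^ 2 := pow_le_pow_left₀ (by positivity) hx2 2
      _ = 16 * n ^ 4 * r := by
          rw [mul_pow, Real.sq_sqrt (by positivity)]; ring


lemma inv_sq_tel (k : ℕ) (hk : 1 ≤ k) :
    1 / (((k : ℝ) + 1) * √((k : ℝ) + 1)) ≤ 2 * (1 / √(k : ℝ) - 1 / √((k : ℝ) + 1)) := by
  have hk' : (1 : ℝ) ≤ k := by exact_mod_cast hk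
  have hx : 0 < √(k : ℝ) := Real.sqrt_pos.2 (by linarith)
  have hy : 0 < √((k : ℝ) + 1) := Real.sqrt_pos.2 (by linarith)
  have hxs : √(k : ℝ) ^ 2 = k := Real.sq_sqrt (by linarith)
  have hys : √((k : ℝ) + 1) ^ 2 = k + 1 := Real.sq_sqrt (by linarith)
  have hxy : √(k : ℝ) ≤ √((k : ℝ) + 1) := Real.sqrt_le_sqrt (by linarith)
  nth_rw 1 [← hys]
  set x := √(k : ℝ)
  set y := √((k : ℝ) + 1)
  have h : 2 * (1 / x - 1 / y) = 2 / (x * y * (x + y)) := by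
    have : (y - x) * (x + y) = 1 := by nlinarith
    rw [eq_div_iff (by positivity)]
    field_simp
    linear_combination this
  rw [h, div_le_div_iff₀ (by positivity) (by positivity)]
  have h1 : x * y ≤ y * y := by nlinarith
  have h2 : x * y * (x + y) ≤ y * y * (y + y) := by
    apply mul_le_mul h1 (by linarith) (by positivity) (by positivity)
  nlinarith

lemma tel_sum (r : ℕ) (hr : 1 ≤ r) (m : ℕ) :
    ∑ k ∈ Finset.Ico r (r + m), 1 / (((k : ℝ) + 1) * √((k : ℝ) + 1))
      ≤ 2 * (1 / √(r : ℝ) - 1 / √((r + m : ℕ) : ℝ)) := by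
  induction m with
  | zero => simp
  | succ m ih =>
    rw [← add_assoc, Finset.sum_Ico_succ_top (by omega)]
    have := inv_sq_tel (r + m) (by omega)
    push_cast at ih this ⊢
    linarith

lemma tail {n : ℕ} (l : Fin n → ℝ) (hl : ∀ i, 0 ≤ l i) {N : ℝ} (hN : 0 ≤ N)
    (h : ∀ J : Finset (Fin n), 1 ≤ J.card → (∑ i ∈ J, l i) ^ 4 ≤ 16 * N ^ 4 * J.card)
    (r : ℕ) (hr : 1 ≤ r) :
    ∃ I : Finset (Fin n), I.card ≤ r ∧ ∑ i ∈ Iᶜ, l i ^ 2 ≤ 8 * N ^ 2 / √(r : ℝ) := by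
  classical
  let σ := Tuple.sort (fun i => - l i)
  have hσ : Monotone ((fun i => - l i) ∘ σ) := Tuple.monotone_sort _
  let I : Finset (Fin n) := (Finset.univ.filter fun k : Fin n => k.val < r).map σ.toEmbedding
  refine ⟨I, ?_, ?_⟩
  · rw [Finset.card_map]
    calc _ = ((Finset.univ.filter fun k : Fin n => k.val < r).map Fin.valEmbedding).card := by
            rw [Finset.card_map]
      _ ≤ (Finset.range r).card := Finset.card_le_card (by intro x; simp; intro y hy hyx; omega)
      _ = r := by simp
  · have hk : ∀ k : Fin n, l (σ k) ^ 2 ≤ 4 * N ^ 2 * (1 / (((k : ℝ) + 1) * √((k : ℝ) + 1))) := by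
      intro k
      have hJ := h ((Finset.Iic k).map σ.toEmbedding) (by simp)
      rw [Finset.card_map, Fin.card_Iic, Finset.sum_map] at hJ
      have h1 : ((k : ℝ) + 1) * l (σ k) ≤ ∑ x ∈ Finset.Iic k, l (σ.toEmbedding x) := by
        calc ((k : ℝ) + 1) * l (σ k) = ∑ x ∈ Finset.Iic k, l (σ k) := by simp
          _ ≤ _ := by
            refine Finset.sum_le_sum fun x hx => ?_
            have := hσ (Finset.mem_Iic.1 hx)
            simpa using this
      have h2 := (pow_le_pow_left₀ (mul_nonneg (by positivity) (hl _)) h1 4).trans hJ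
      push_cast at h2
      set c : ℝ := (k : ℝ) + 1 with hc
      have hc0 : 0 < c := by positivity
      have hs : √c ^ 2 = c := Real.sq_sqrt hc0.le
      have hs0 : 0 < √c := Real.sqrt_pos.2 hc0
      refine le_of_pow_le_pow_left₀ (n := 2) (by norm_num) (by positivity) ?_
      have e1 : (4 * N ^ 2 * (1 / (c * √c))) ^ 2 = 16 * N ^ 4 / c ^ 3 := by
        rw [mul_pow, div_pow, mul_pow c, hs]; field_simp; ring
      rw [e1, le_div_iff₀ (by positivity)]
      have : c * ((l (σ k) ^ 2) ^ 2 * c ^ 3) ≤ c * (16 * N ^ 4) := by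
        calc _ = (c * l (σ k)) ^ 4 := by ring
          _ ≤ _ := h2
          _ = _ := by ring
      exact le_of_mul_le_mul_left this hc0
    have hIc : Iᶜ = (Finset.univ.filter fun k : Fin n => r ≤ k.val).map σ.toEmbedding := by
      ext x
      simp only [I, Finset.mem_compl, Finset.mem_map_equiv, Finset.mem_filter, Finset.mem_univ,
        true_and, not_lt]
    rw [hIc, Finset.sum_map]
    have hnn : ∀ k : ℕ, 0 ≤ 1 / (((k : ℝ) + 1) * √((k : ℝ) + 1)) := fun k => by positivity
    calc ∑ x ∈ Finset.univ.filter (fun k : Fin n => r ≤ k.val), l (σ.toEmbedding x) ^ 2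
        ≤ ∑ x ∈ Finset.univ.filter (fun k : Fin n => r ≤ k.val),
          4 * N ^ 2 * (1 / (((x : ℝ) + 1) * √((x : ℝ) + 1))) :=
          Finset.sum_le_sum fun x _ => hk x
      _ = 4 * N ^ 2 * ∑ x ∈ (Finset.univ.filter (fun k : Fin n => r ≤ k.val)).map Fin.valEmbedding,
          (1 / (((x : ℝ) + 1) * √((x : ℝ) + 1))) := by
          rw [← Finset.mul_sum, Finset.sum_map]; rfl
      _ ≤ 4 * N ^ 2 * ∑ x ∈ Finset.Ico r (r + n), (1 / (((x : ℝ) + 1) * √((x : ℝ) + 1))) := by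
          apply mul_le_mul_of_nonneg_left _ (by positivity)
          apply Finset.sum_le_sum_of_subset_of_nonneg
          · intro x; simp; intro y hy hyx; omega
          · intro x _ _; exact hnn x
      _ ≤ 4 * N ^ 2 * (2 * (1 / √(r : ℝ))) := by
          apply mul_le_mul_of_nonneg_left _ (by positivity)
          have := tel_sum r hr n
          have h0 : 0 ≤ 1 / √((r + n : ℕ) : ℝ) := by positivity
          linarith
      _ = 8 * N ^ 2 / √(r : ℝ) := by ring

lemma count {m : ℕ} {P A : Matrix (Fin m) (Fin m) ℝ} (hP : P.PosSemidef)
    (hA : ∀ i j, A i j = 0 ∨ A i j = 1)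
    {n d e t p : ℝ} (hn : (m : ℝ) = n) (hn1 : 0 < n) (hd0 : 0 ≤ d) (he0 : 0 ≤ e)
    (hd : ∀ i, P i i ≤ d)
    (he : ∑ i, ∑ j, (P i j - A i j) ^ 2 ≤ e ^ 2) (htr : ∑ i, P i i ≤ n * t)
    (hen : e ≤ n) (herr : t ^ 8 * ((d + 2) * e) ≤ n) (hp0 : 0 < p) (hp1 : p ≤ 1)
    (hlow : p * n ^ 2 / 4 ≤ ∑ i, ∑ j, A i j) (hup : ∑ i, ∑ j, A i j ≤ p * n ^ 2)
    (hpe : n * e ≤ p * n ^ 2 / 16) :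
    p ^ 2 * √p * n ^ 3 / 11776 ≤ ∑ v, qf A (A v) + n ^ 2 * e := by
  classical
  have hA2 : ∀ i j, A i j ^ 2 = A i j := by
    intro i j; rcases hA i j with h | h <;> simp [h]
  obtain ⟨u, hu, hu2, hPu⟩ := exists_spec P hP.1
  have hl := hP.eigenvalues_nonneg
  set l := hP.1.eigenvalues
  have hPs : P = spec u l := by ext i j; exact hPu i j
  obtain ⟨s, hs⟩ := exists_nat_ge (t ^ 4)
  have hgr := growth hP hA (n := n) (by simpa using hn) hd0 he0 hd he htr hen herr s
  have hJ : ∀ (J : Finset (Fin m)) (r : ℕ), 1 ≤ r → J.card ≤ r →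
      (∑ i ∈ J, l i) ^ 4 ≤ 16 * n ^ 4 * r := by
    intro J r hr hJr
    have := hgr r hr (hs.trans (by linarith [(Nat.cast_nonneg r : (0 : ℝ) ≤ r)])) J (fun k => u k)
      (fun k l => by
        have h1 := hu k.1 l.1
        rw [h1]
        by_cases h : k = l
        · rw [if_pos h, if_pos (congrArg Subtype.val h)]
        · rw [if_neg h, if_neg (fun h' => h (Subtype.ext h'))]) (by simpa using hJr)
    have e1 : ∑ k : J, qf P (u k) = ∑ i ∈ J, l i := by
      rw [← Finset.sum_coe_sort J]
      refine Finset.sum_congr rfl fun k _ => ?_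
      rw [hPs]; exact qf_spec_self hu l k
    rwa [e1] at this
  set r : ℕ := ⌈(512 / p) ^ 2⌉₊ with hrdef
  have hr512 : (512 / p) ^ 2 ≤ r := Nat.le_ceil _
  have hpinv : 1 ≤ 1 / p := by rw [le_div_iff₀ hp0]; linarith
  have hr513 : (r : ℝ) ≤ (513 / p) ^ 2 := by
    have h1 : (r : ℝ) < (512 / p) ^ 2 + 1 := Nat.ceil_lt_add_one (by positivity)
    have h2 : (513 / p) ^ 2 = (512 / p) ^ 2 + 1025 * (1 / p) ^ 2 := by ring
    nlinarith
  have hr1 : 1 ≤ r := Nat.one_le_ceil_iff.2 (by positivity)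
  obtain ⟨I, hIr, hIt⟩ := tail l hl hn1.le (fun J hJ1 => hJ J _ hJ1 le_rfl) r hr1
  have hsqr : 512 / p ≤ √(r : ℝ) := Real.le_sqrt_of_sq_le hr512
  have htail : ∑ i ∈ Iᶜ, l i ^ 2 ≤ p * n ^ 2 / 64 := by
    refine hIt.trans ?_
    rw [div_le_iff₀ (lt_of_lt_of_le (by positivity) hsqr)]
    calc 8 * n ^ 2 = p * n ^ 2 / 64 * (512 / p) := by field_simp; norm_num
      _ ≤ _ := mul_le_mul_of_nonneg_left hsqr (by positivity)
  have hsp : √p ^ 2 = p := Real.sq_sqrt hp0.le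
  have hsp0 : 0 < √p := Real.sqrt_pos.2 hp0
  have htrI : ∑ i ∈ I, l i ≤ 46 * n / √p := by
    have h1 := hJ I r hr1 hIr
    have h2 : (∑ i ∈ I, l i) ^ 4 ≤ (46 * n / √p) ^ 4 := by
      refine h1.trans ?_
      have : (46 * n / √p) ^ 4 = 4477456 * n ^ 4 * (1 / p) ^ 2 := by
        rw [div_pow, show √p ^ 4 = (√p ^ 2) ^ 2 by ring, hsp]; field_simp; norm_num
      rw [this]
      have h3 : (513 / p) ^ 2 = 263169 * (1 / p) ^ 2 := by ring
      rw [h3] at hr513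
      have h4 : 0 ≤ n ^ 4 := by positivity
      have h5 := mul_le_mul_of_nonneg_left hr513 h4
      have h6 : 0 ≤ n ^ 4 * (1 / p) ^ 2 := by positivity
      nlinarith
    exact le_of_pow_le_pow_left₀ (by norm_num) (by positivity) h2
  let PI := spec u (fun k => if k ∈ I then l k else 0)
  have hPI : PI.PosSemidef := spec_psd u (by intro k; split_ifs; exacts [hl k, le_rfl])
  have hdiff : P - PI = spec u (fun k => if k ∈ I then 0 else l k) := by
    rw [hPs, spec_sub]; congr 1; ext k; split_ifs <;> simp
  have hsubpsd : (P - PI).PosSemidef := by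
    rw [hdiff]; exact spec_psd u (by intro k; split_ifs; exacts [le_rfl, hl k])
  have hPItr : ∑ i, PI i i ≤ 46 * n / √p := by
    rw [spec_trace hu]; simpa using htrI
  have hfr : ∑ i, ∑ j, (P - PI) i j ^ 2 ≤ (√p * n / 8) ^ 2 := by
    rw [hdiff]
    simp_rw [sq]
    rw [spec_frob hu]
    calc _ = ∑ i ∈ Iᶜ, l i ^ 2 := by
            rw [← Finset.sum_filter_add_sum_filter_not Finset.univ (· ∈ I)]
            rw [Finset.sum_eq_zero (by intro x hx; simp at hx; simp [hx]), zero_add]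
            rw [show Finset.univ.filter (fun x => x ∉ I) = Iᶜ by ext; simp]
            refine Finset.sum_congr rfl fun k hk => ?_
            rw [Finset.mem_compl] at hk; simp [hk, sq]
      _ ≤ _ := htail
      _ = √p ^ 2 * n ^ 2 / 64 := by rw [hsp]
      _ = _ := by ring
  have hAfr : ∑ i, ∑ j, A i j ^ 2 ≤ (√p * n) ^ 2 := by
    simp_rw [hA2]; rw [mul_pow, hsp]; exact hup
  have hAfr' : ∑ i, ∑ j, A i j ^ 2 ≤ n ^ 2 := by
    simp_rw [hA2]; nlinarith [sq_nonneg n]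
  have c1 := abs_le.1 (frob_cs A (P - PI) (by positivity) (by positivity) hAfr hfr)
  have c2 := abs_le.1 (frob_cs A (P - A) hn1.le he0 hAfr' (by simpa using he))
  have hinner : p * n ^ 2 / 16 ≤ ∑ i, ∑ j, A i j * PI i j := by
    have e0 : ∑ i, ∑ j, A i j * PI i j = ∑ i, ∑ j, A i j + ∑ i, ∑ j, A i j * (P - A) i j
        - ∑ i, ∑ j, A i j * (P - PI) i j := by
      simp only [← Finset.sum_add_distrib, ← Finset.sum_sub_distrib]
      refine Finset.sum_congr rfl fun i _ => Finset.sum_congr rfl fun j _ => ?_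
      simp only [Matrix.sub_apply]
      linear_combination hA2 i j
    have e1 : √p * n * (√p * n / 8) = p * n ^ 2 / 8 := by
      rw [← hsp]; rw [Real.sqrt_sq hsp0.le]; ring
    rw [e0]
    linarith [c1.2, c2.1]
  -- the test vectors
  set θ : ℝ := p * √p * n / 736 with hθ
  have hθ0 : 0 < θ := by positivity
  have hv : ∀ v, 2 * θ * ∑ j, A v j * PI v j ≤ θ ^ 2 * PI v v + qf PI (A v) := by
    intro v
    have h0 := qf_psd hPI (fun i => θ * (if i = v then 1 else 0) - A v i)
    have : qf PI (fun i => θ * (if i = v then 1 else 0) - A v i)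
        = θ ^ 2 * PI v v - 2 * θ * (∑ j, A v j * PI v j) + qf PI (A v) := by
      have e1 : ∀ i j, PI i j * ((θ * (if i = v then 1 else 0) - A v i) *
          (θ * (if j = v then 1 else 0) - A v j)) =
          (if i = v then (if j = v then θ ^ 2 * PI i j else 0) else 0)
          - (if i = v then θ * (A v j * PI i j) else 0) - (if j = v then θ * (A v i * PI i j) else 0)
          + PI i j * (A v i * A v j) := by
        intro i j; split_ifs <;> ring
      unfold qf
      simp_rw [e1, Finset.sum_add_distrib, Finset.sum_sub_distrib]
      have e2 : ∑ i, ∑ j, (if j = v then θ * (A v i * PI i j) else 0)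
          = θ * ∑ j, A v j * PI v j := by
        simp only [Finset.sum_ite_eq', Finset.mem_univ, if_true, Finset.mul_sum]
        refine Finset.sum_congr rfl fun i _ => ?_
        rw [show PI i v = PI v i from spec_symm u _ i v]
      have e3 : ∑ i, ∑ j, (if i = v then θ * (A v j * PI i j) else 0)
          = θ * ∑ j, A v j * PI v j := by
        rw [Finset.sum_comm]
        simp only [Finset.sum_ite_eq', Finset.mem_univ, if_true, Finset.mul_sum]
      have e4 : ∑ i, ∑ j, (if i = v then (if j = v then θ ^ 2 * PI i j else 0) else 0)
          = θ ^ 2 * PI v v := by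
        rw [Finset.sum_comm]
        simp only [Finset.sum_ite_eq', Finset.mem_univ, if_true]
      rw [e2, e3, e4]; ring
    linarith
  have hsum := Finset.sum_le_sum fun v (_ : v ∈ Finset.univ) => hv v
  rw [Finset.sum_add_distrib, ← Finset.mul_sum, ← Finset.mul_sum] at hsum
  have hqv : ∀ v, qf PI (A v) ≤ qf A (A v) + n * e := by
    intro v
    have h1 := qf_psd hsubpsd (A v)
    rw [qf_sub] at h1
    have h2 := abs_le.1 (qf_le_frob (P - A) (A v) he0 hn1.le (by simpa using he) (b := n) (by
      calc ∑ i, A v i ^ 2 ≤ ∑ i : Fin m, (1 : ℝ) := by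
            refine Finset.sum_le_sum fun j _ => ?_
            rcases hA v j with h | h <;> simp [h]
        _ = n := by simp [hn]))
    rw [qf_sub] at h2
    linarith [h2.2]
  have hsum2 : ∑ v, qf PI (A v) ≤ ∑ v, qf A (A v) + n ^ 2 * e := by
    refine (Finset.sum_le_sum fun v _ => hqv v).trans (le_of_eq ?_)
    rw [Finset.sum_add_distrib]; simp [hn]; ring
  have f1 : 2 * θ * (p * n ^ 2 / 16) ≤ 2 * θ * ∑ i, ∑ j, A i j * PI i j :=
    mul_le_mul_of_nonneg_left hinner (by positivity)
  have f2 : θ ^ 2 * ∑ i, PI i i ≤ θ ^ 2 * (46 * n / √p) :=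
    mul_le_mul_of_nonneg_left hPItr (by positivity)
  have f3 : 2 * θ * (p * n ^ 2 / 16) - θ ^ 2 * (46 * n / √p) = p ^ 2 * √p * n ^ 3 / 11776 := by
    rw [hθ]; field_simp; ring
  linarith

lemma avg_subset {V : Type*} (f : V → ℝ) (T : Finset V) (k : ℕ) :
    ∀ m : ℕ, m + k = T.card → ∃ U ⊆ T, U.card = m ∧
      (m : ℝ) * ∑ v ∈ T, f v ≤ (T.card : ℝ) * ∑ v ∈ U, f v := by
  classical
  induction k with
  | zero =>
    intro m hm
    exact ⟨T, subset_rfl, by omega, by rw [← hm]; simp⟩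
  | succ k ih =>
    intro m hm
    obtain ⟨U, hUT, hUc, hU⟩ := ih (m + 1) (by omega)
    obtain ⟨u, hu, humin⟩ := U.exists_min_image f (Finset.card_pos.1 (by omega))
    refine ⟨U.erase u, (Finset.erase_subset _ _).trans hUT, by
      rw [Finset.card_erase_of_mem hu]; omega, ?_⟩
    have h1 : ((m : ℝ) + 1) * f u ≤ ∑ v ∈ U, f v := by
      have := Finset.card_nsmul_le_sum U f (f u) humin
      rw [hUc] at this; simpa using this
    have h2 : ∑ v ∈ U.erase u, f v = ∑ v ∈ U, f v - f u := by
      rw [← Finset.add_sum_erase U f hu]; ring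
    rw [h2]
    push_cast at hU
    have hm0 : (0 : ℝ) ≤ m := Nat.cast_nonneg m
    have hT0 : (0 : ℝ) ≤ T.card := Nat.cast_nonneg _
    have h3 := mul_le_mul_of_nonneg_left hU hm0
    have h4 := mul_le_mul_of_nonneg_left h1 hT0
    have h5 : ((m : ℝ) + 1) * (m * ∑ v ∈ T, f v)
        ≤ ((m : ℝ) + 1) * (T.card * (∑ v ∈ U, f v - f u)) := by nlinarith
    exact le_of_mul_le_mul_left h5 (by positivity)

lemma heavy {m : ℕ} (A : Matrix (Fin m) (Fin m) ℝ) (hs : ∀ i j, A i j = A j i)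
    (h0 : ∀ i j, 0 ≤ A i j) {p : ℝ} (hp : 0 < p) (hm : (10000 : ℝ) ≤ m)
    (htot : ∑ i, ∑ j, A i j = p * (m : ℝ) ^ 2)
    (h : ∀ S : Finset (Fin m), (m : ℝ) / 8 ≤ S.card →
      ∑ i ∈ S, ∑ j ∈ S, A i j ≤ 2 * p * (S.card : ℝ) ^ 2) :
    ∑ v, (if 64 * p * m < ∑ j, A v j then ∑ j, A v j else 0) ≤ p * (m : ℝ) ^ 2 / 3 := by
  classical
  rw [← Finset.sum_filter]
  set H := Finset.univ.filter fun v => 64 * p * m < ∑ j, A v j with hH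
  have hm0 : (0 : ℝ) < m := by linarith
  have hHc : (H.card : ℝ) ≤ m / 64 := by
    have h1 : (H.card : ℝ) * (64 * p * m) ≤ p * (m : ℝ) ^ 2 := by
      rw [← htot]
      calc (H.card : ℝ) * (64 * p * m) ≤ ∑ v ∈ H, ∑ j, A v j := by
            have := Finset.card_nsmul_le_sum H (fun v => ∑ j, A v j) (64 * p * m)
              (fun v hv => (Finset.mem_filter.1 hv).2.le)
            simpa using this
        _ ≤ _ := Finset.sum_le_univ_sum_of_nonneg fun v => Finset.sum_nonneg fun j _ => h0 v j
    have h2 : (H.card : ℝ) * 64 * (p * m) ≤ m * (p * m) := by nlinarith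
    have := le_of_mul_le_mul_right h2 (by positivity)
    linarith
  set X := ∑ v ∈ H, ∑ j, A v j with hX
  set r : ℕ := ⌈(m : ℝ) / 8⌉₊ with hr
  have hr1 : (m : ℝ) / 8 ≤ r := Nat.le_ceil _
  have hr2 : (r : ℝ) < (m : ℝ) / 8 + 1 := Nat.ceil_lt_add_one (by positivity)
  have hrm : r ≤ m := by
    have : (r : ℝ) ≤ m := by linarith
    exact_mod_cast this
  obtain ⟨U, -, hUc, hU⟩ := avg_subset (fun u => ∑ v ∈ H, A u v) Finset.univ (m - r) r
    (by simp; omega)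
  have hXU : ∑ u, ∑ v ∈ H, A u v = X := by
    refine Finset.sum_comm.trans ?_
    exact Finset.sum_congr rfl fun v _ => Finset.sum_congr rfl fun j _ => hs j v
  rw [hXU, Finset.card_univ, Fintype.card_fin] at hU
  have hX0 : 0 ≤ X := Finset.sum_nonneg fun v _ => Finset.sum_nonneg fun j _ => h0 v j
  have hSS : ∑ u ∈ U, ∑ v ∈ H, A u v ≤ ∑ i ∈ H ∪ U, ∑ j ∈ H ∪ U, A i j := by
    calc _ ≤ ∑ u ∈ U, ∑ j ∈ H ∪ U, A u j := Finset.sum_le_sum fun u _ =>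
            Finset.sum_le_sum_of_subset_of_nonneg Finset.subset_union_left fun j _ _ => h0 u j
      _ ≤ _ := Finset.sum_le_sum_of_subset_of_nonneg Finset.subset_union_right
            fun i _ _ => Finset.sum_nonneg fun j _ => h0 i j
  have hSc1 : (m : ℝ) / 8 ≤ (H ∪ U).card := by
    have : U.card ≤ (H ∪ U).card := Finset.card_le_card Finset.subset_union_right
    rw [hUc] at this
    have : (r : ℝ) ≤ (H ∪ U).card := by exact_mod_cast this
    linarith
  have hSc2 : ((H ∪ U).card : ℝ) ≤ 0.141 * m := by
    have : (H ∪ U).card ≤ H.card + r := hUc ▸ Finset.card_union_le H U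
    have : ((H ∪ U).card : ℝ) ≤ H.card + r := by exact_mod_cast this
    linarith
  have h3 := h _ hSc1
  have h4 : ((H ∪ U).card : ℝ) ^ 2 ≤ (0.141 * m) ^ 2 := pow_le_pow_left₀ (by positivity) hSc2 2
  have h5 : X / 8 ≤ ∑ u ∈ U, ∑ v ∈ H, A u v := by
    have : (m : ℝ) * (X / 8) ≤ m * ∑ u ∈ U, ∑ v ∈ H, A u v := by
      refine le_trans ?_ hU
      nlinarith
    exact le_of_mul_le_mul_left this hm0
  have h6 : 2 * p * ((H ∪ U).card : ℝ) ^ 2 ≤ 2 * p * (0.141 * m) ^ 2 :=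
    mul_le_mul_of_nonneg_left h4 (by positivity)
  have h7 : 0 < p * (m : ℝ) ^ 2 := by positivity
  nlinarith

lemma core {m : ℕ} (A N : Matrix (Fin m) (Fin m) ℝ) (hs : ∀ i j, A i j = A j i)
    (h01 : ∀ i j, A i j = 0 ∨ A i j = 1) (hdiag : ∀ i, A i i = 0)
    {a p : ℝ} (ha : 10 ≤ a) (hm : (m : ℝ) = a ^ 400) (hpa : 1 ≤ p * a ^ 2) (hp1 : p ≤ 1)
    (htot : ∑ i, ∑ j, A i j = p * (m : ℝ) ^ 2)
    (hN : N.PosSemidef) (hAN : (A + N).PosSemidef) (htr : ∑ i, N i i ≤ a ^ 402)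
    (hfr : ∑ i, ∑ j, N i j ^ 2 ≤ (a ^ 301) ^ 2)
    (hheavy : ∑ v, (if 64 * p * m < ∑ j, A v j then ∑ j, A v j else 0) ≤ p * (m : ℝ) ^ 2 / 3) :
    ∃ T : Finset (Fin m), (T.card : ℝ) ≤ 64 * p * m ∧
      p ^ 2 * √p * (m : ℝ) ^ 2 / 24000 ≤ ∑ i ∈ T, ∑ j ∈ T, A i j := by
  classical
  have ha0 : 0 < a := by linarith
  have ha1 : 1 ≤ a := by linarith
  have hp0 : 0 < p := by
    by_contra hc
    nlinarith [sq_nonneg a]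
  have hNd : ∀ i, 0 ≤ N i i := fun i => by simpa using hN.diag_nonneg (i := i)
  have hA0 : ∀ i j, 0 ≤ A i j := fun i j => by rcases h01 i j with h | h <;> simp [h]
  have hA1 : ∀ i j, A i j ≤ 1 := fun i j => by rcases h01 i j with h | h <;> simp [h]
  let z : Fin m → ℝ := fun i => if ∑ j, A i j ≤ 64 * p * m ∧ N i i ≤ a ^ 8 then 1 else 0
  have hz : ∀ i, z i = 0 ∨ z i = 1 := fun i => by
    simp only [z]; split_ifs <;> simp
  have hz0 : ∀ i, 0 ≤ z i := fun i => by rcases hz i with h | h <;> simp [h]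
  have hz1 : ∀ i, z i ≤ 1 := fun i => by rcases hz i with h | h <;> simp [h]
  let A' : Matrix (Fin m) (Fin m) ℝ := Matrix.of fun i j => z i * z j * A i j
  let P' : Matrix (Fin m) (Fin m) ℝ := Matrix.of fun i j => z i * z j * (A + N) i j
  have hP' : P'.PosSemidef := by
    refine psd_of_qf (fun i j => ?_) (fun x => ?_)
    · have : (A + N) i j = (A + N) j i := by simpa using hAN.1.apply j i
      simp only [P', Matrix.of_apply, this]; ring
    · have h1 := qf_psd hAN (fun i => z i * x i)
      refine le_of_le_of_eq h1 ?_
      unfold qf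
      refine Finset.sum_congr rfl fun i _ => Finset.sum_congr rfl fun j _ => ?_
      simp only [P', Matrix.of_apply]; ring
  have hA'01 : ∀ i j, A' i j = 0 ∨ A' i j = 1 := fun i j => by
    simp only [A', Matrix.of_apply]
    rcases hz i with h1 | h1 <;> rcases hz j with h2 | h2 <;> rcases h01 i j with h3 | h3 <;>
      simp [h1, h2, h3]
  have hA'le : ∀ i j, A' i j ≤ A i j := fun i j => by
    simp only [A', Matrix.of_apply]
    rcases hz i with h1 | h1 <;> rcases hz j with h2 | h2 <;> simp [h1, h2, hA0]
  have hPd : ∀ i, P' i i = z i * N i i := fun i => by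
    simp only [P', Matrix.of_apply, Matrix.add_apply, hdiag]
    rcases hz i with h1 | h1 <;> simp [h1]
  have hm0 : (0 : ℝ) < m := by rw [hm]; positivity
  -- row loss
  have hrow : ∀ i, (1 - z i) * ∑ j, A i j ≤
      (if 64 * p * m < ∑ j, A i j then ∑ j, A i j else 0) + m * N i i / a ^ 8 := by
    intro i
    have hd0 : 0 ≤ ∑ j, A i j := Finset.sum_nonneg fun j _ => hA0 i j
    have hdm : ∑ j, A i j ≤ m := by
      calc _ ≤ ∑ j : Fin m, (1 : ℝ) := Finset.sum_le_sum fun j _ => hA1 i j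
        _ = m := by simp
    have h1 : 0 ≤ m * N i i / a ^ 8 := div_nonneg (mul_nonneg hm0.le (hNd i)) (by positivity)
    by_cases hh : 64 * p * m < ∑ j, A i j
    · rw [if_pos hh]
      nlinarith [mul_nonneg (hz0 i) hd0]
    · rw [if_neg hh]
      by_cases hb : N i i ≤ a ^ 8
      · have : z i = 1 := if_pos ⟨not_lt.1 hh, hb⟩
        rw [this]; simpa using h1
      · have h2 : (m : ℝ) ≤ m * N i i / a ^ 8 := by
          rw [le_div_iff₀ (by positivity)]
          exact mul_le_mul_of_nonneg_left (not_le.1 hb).le hm0.le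
        nlinarith [mul_nonneg (hz0 i) hd0]
  have hloss : ∑ i, (1 - z i) * ∑ j, A i j ≤ p * (m : ℝ) ^ 2 / 3 + a ^ 794 := by
    refine (Finset.sum_le_sum fun i _ => hrow i).trans ?_
    rw [Finset.sum_add_distrib]
    refine add_le_add hheavy ?_
    rw [← Finset.sum_div, ← Finset.mul_sum, div_le_iff₀ (by positivity)]
    calc (m : ℝ) * ∑ i, N i i ≤ m * a ^ 402 := mul_le_mul_of_nonneg_left htr hm0.le
      _ = a ^ 794 * a ^ 8 := by rw [hm]; ring
  have hbig : ∀ k l : ℕ, k ≤ l → a ^ k ≤ a ^ l := fun k l h => pow_le_pow_right₀ ha1 h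
  have hpn : a ^ 798 ≤ p * (m : ℝ) ^ 2 := by
    have : p * (m : ℝ) ^ 2 = p * a ^ 2 * a ^ 798 := by rw [hm]; ring
    rw [this]
    exact le_mul_of_one_le_left (by positivity) hpa
  have h794 : 10000 * a ^ 794 ≤ a ^ 798 := by
    have : a ^ 798 = a ^ 4 * a ^ 794 := by ring
    rw [this]
    have : (10 : ℝ) ^ 4 ≤ a ^ 4 := pow_le_pow_left₀ (by norm_num) ha 4
    exact mul_le_mul_of_nonneg_right (by linarith) (by positivity)
  have hlow : p * (m : ℝ) ^ 2 / 4 ≤ ∑ i, ∑ j, A' i j := by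
    have h1 : ∑ i, ∑ j, A i j - ∑ i, ∑ j, A' i j ≤ 2 * ∑ i, (1 - z i) * ∑ j, A i j := by
      have e2 : ∑ i, (1 - z i) * ∑ j, A i j = ∑ i, ∑ j, (1 - z j) * A i j := by
        rw [Finset.sum_comm]
        refine Finset.sum_congr rfl fun i _ => ?_
        rw [Finset.mul_sum]
        exact Finset.sum_congr rfl fun j _ => by rw [hs]
      rw [two_mul]
      nth_rw 2 [e2]
      simp only [Finset.mul_sum]
      rw [← Finset.sum_sub_distrib, ← Finset.sum_add_distrib]
      refine Finset.sum_le_sum fun i _ => ?_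
      rw [← Finset.sum_sub_distrib, ← Finset.sum_add_distrib]
      refine Finset.sum_le_sum fun j _ => ?_
      simp only [A', Matrix.of_apply]
      rcases hz i with h1 | h1 <;> rcases hz j with h2 | h2 <;> simp [h1, h2, hA0]
    rw [htot] at h1
    have h9 : 0 < a ^ 794 := by positivity
    linarith
  have hup : ∑ i, ∑ j, A' i j ≤ p * (m : ℝ) ^ 2 := by
    rw [← htot]
    exact Finset.sum_le_sum fun i _ => Finset.sum_le_sum fun j _ => hA'le i j
  have hcount := count (P := P') (A := A') hP' hA'01 (n := m) (d := a ^ 8) (e := a ^ 301)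
    (t := a ^ 2) (p := p) rfl hm0 (by positivity) (by positivity)
    (fun i => by
      rw [hPd]
      simp only [z]
      split_ifs with h
      · simpa using h.2
      · simp; positivity)
    (by
      refine le_trans ?_ hfr
      refine Finset.sum_le_sum fun i _ => Finset.sum_le_sum fun j _ => ?_
      simp only [A', P', Matrix.of_apply, Matrix.add_apply]
      rcases hz i with h1 | h1 <;> rcases hz j with h2 | h2 <;> simp [h1, h2, sq_nonneg])
    (by
      calc ∑ i, P' i i ≤ ∑ i, N i i := Finset.sum_le_sum fun i _ => by
            rw [hPd]; nlinarith [hNd i, hz1 i]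
        _ ≤ a ^ 402 := htr
        _ = m * a ^ 2 := by rw [hm]; ring)
    (by rw [hm]; exact hbig _ _ (by norm_num))
    (by
      rw [hm]
      have h8 : a ^ 8 + 2 ≤ a ^ 9 := by
        have : (1 : ℝ) ≤ a ^ 8 := one_le_pow₀ ha1
        have e : a ^ 9 = a * a ^ 8 := by ring
        nlinarith
      calc (a ^ 2) ^ 8 * ((a ^ 8 + 2) * a ^ 301) ≤ (a ^ 2) ^ 8 * (a ^ 9 * a ^ 301) := by gcongr
        _ = a ^ 326 := by ring
        _ ≤ a ^ 400 := hbig _ _ (by norm_num))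
    hp0 hp1 hlow hup
    (by
      have h1 : (m : ℝ) * a ^ 301 = a ^ 701 := by rw [hm]; ring
      have h2 := hbig 701 794 (by norm_num)
      rw [h1]; linarith)
  -- averaging
  have herr : (m : ℝ) ^ 2 * a ^ 301 ≤ p ^ 2 * √p * (m : ℝ) ^ 3 / 24000 := by
    have hsp : p ≤ √p := by
      have h1 := Real.sq_sqrt hp0.le
      have h2 : √p ≤ 1 := Real.sqrt_le_one.2 hp1
      nlinarith [Real.sqrt_nonneg p]
    have h3 : p ^ 3 ≤ p ^ 2 * √p := by nlinarith [sq_nonneg p]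
    have h4 : 1 ≤ (p * a ^ 2) ^ 3 := one_le_pow₀ hpa
    have h5 : a ^ 1194 ≤ p ^ 2 * √p * (m : ℝ) ^ 3 := by
      calc a ^ 1194 ≤ (p * a ^ 2) ^ 3 * a ^ 1194 := le_mul_of_one_le_left (by positivity) h4
        _ = p ^ 3 * (m : ℝ) ^ 3 := by rw [hm]; ring
        _ ≤ _ := by gcongr
    have h6 : (m : ℝ) ^ 2 * a ^ 301 = a ^ 1101 := by rw [hm]; ring
    have h7 : 100000 * a ^ 1101 ≤ a ^ 1194 := by
      have h8 : (10 : ℝ) ^ 5 ≤ a ^ 5 := pow_le_pow_left₀ (by norm_num) ha 5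
      calc 100000 * a ^ 1101 ≤ a ^ 5 * a ^ 1101 :=
            mul_le_mul_of_nonneg_right (by linarith) (by positivity)
        _ = a ^ 1106 := by ring
        _ ≤ _ := hbig _ _ (by norm_num)
    have : 0 < a ^ 1101 := by positivity
    rw [h6]; linarith
  set c := p ^ 2 * √p * (m : ℝ) ^ 2 / 24000 with hc
  have hcm : m * c ≤ ∑ v, qf A' (A' v) := by
    have e1 : p ^ 2 * √p * (m : ℝ) ^ 3 = 24000 * (m * c) := by rw [hc]; ring
    rw [e1] at hcount herr
    have : 0 ≤ m * c := by positivity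
    linarith
  obtain ⟨v, hv⟩ : ∃ v, c ≤ qf A' (A' v) := by
    by_contra hcon
    push Not at hcon
    have hne : (Finset.univ : Finset (Fin m)).Nonempty := by
      have : 0 < m := by exact_mod_cast hm0
      exact ⟨⟨0, this⟩, Finset.mem_univ _⟩
    have := Finset.sum_lt_sum_of_nonempty hne (fun v _ => hcon v)
    simp at this
    linarith
  refine ⟨Finset.univ.filter fun y => A' v y = 1, ?_, ?_⟩
  · have h1 : ((Finset.univ.filter fun y => A' v y = 1).card : ℝ) = ∑ y, A' v y := by
      rw [Finset.card_filter]; push_cast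
      refine Finset.sum_congr rfl fun y _ => ?_
      rcases hA'01 v y with h | h <;> simp [h]
    rw [h1]
    by_cases hh : ∑ j, A v j ≤ 64 * p * m
    · exact (Finset.sum_le_sum fun j _ => hA'le v j).trans hh
    · have : z v = 0 := if_neg fun h => hh h.1
      simp only [A', Matrix.of_apply, this]
      simp; positivity
  · refine hv.trans ?_
    unfold qf
    rw [Finset.sum_filter]
    refine Finset.sum_le_sum fun i _ => ?_
    rcases hA'01 v i with h | h
    · simp [h]
    · rw [if_pos h, Finset.sum_filter]
      refine Finset.sum_le_sum fun j _ => ?_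
      rcases hA'01 v j with h' | h' <;> simp [h, h', hA'le]

lemma density_mul {V : Type*} [Fintype V] (G : SimpleGraph V) :
    density G * (Fintype.card V : ℝ) ^ 2 = ∑ i, ∑ j, adjMat G i j := by
  classical
  have h1 : ∑ i, ∑ j, adjMat G i j = 2 * (G.edgeSet.ncard : ℝ) := by
    have h2 := G.sum_degrees_eq_twice_card_edges
    have h3 : G.edgeSet.ncard = G.edgeFinset.card := by
      rw [← SimpleGraph.coe_edgeFinset, Set.ncard_coe_finset]
    rw [h3]
    have h4 : ((∑ v, G.degree v : ℕ) : ℝ) = 2 * (G.edgeFinset.card : ℝ) := by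
      rw [h2]; push_cast; ring
    rw [← h4]
    push_cast
    refine Finset.sum_congr rfl fun i _ => ?_
    rw [← SimpleGraph.card_neighborFinset_eq_degree, SimpleGraph.neighborFinset_eq_filter,
      Finset.card_filter]
    push_cast
    refine Finset.sum_congr rfl fun j _ => ?_
    simp [adjMat]
  rw [h1, density]
  by_cases hc : (Fintype.card V : ℝ) = 0
  · have : IsEmpty V := Fintype.card_eq_zero_iff.1 (by exact_mod_cast hc)
    rw [← h1]; simp [hc]
  · field_simp

lemma density_induce {n : ℕ} (G : SimpleGraph (Fin n)) (S : Finset (Fin n)) :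
    density (G.induce (S : Set (Fin n))) * (S.card : ℝ) ^ 2 = ∑ i ∈ S, ∑ j ∈ S, adjMat G i j := by
  have h := density_mul (G.induce (S : Set (Fin n)))
  have hc : Fintype.card (S : Set (Fin n)) = S.card := by simp
  rw [hc] at h
  rw [h]
  rw [← Finset.sum_coe_sort S]
  refine Finset.sum_congr rfl fun i _ => ?_
  rw [← Finset.sum_coe_sort S]
  refine Finset.sum_congr rfl fun j _ => ?_
  rfl

lemma spStar_use {n : ℕ} (G : SimpleGraph (Fin n)) (M : Matrix (Fin n) (Fin n) ℝ)
    (hM : M.PosSemidef) (hd : ∀ i, M i i ≤ 1) :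
    -∑ i, ∑ j, adjMat G i j * M i j ≤ 2 * spStar G := by
  have hb : BddAbove {x : ℝ | ∃ M : Matrix (Fin n) (Fin n) ℝ, M.PosSemidef ∧ (∀ i, M i i ≤ 1) ∧
      x = (1 / 2) * ∑ i, ∑ j, (-(adjMat G)) i j * M i j} := by
    refine ⟨(1 / 2) * ∑ i : Fin n, ∑ j : Fin n, (1 : ℝ), ?_⟩
    rintro x ⟨M, hM, hd, rfl⟩
    refine mul_le_mul_of_nonneg_left ?_ (by norm_num)
    refine Finset.sum_le_sum fun i _ => Finset.sum_le_sum fun j _ => ?_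
    have := abs_le.1 (psd_entry hM hd i j)
    simp only [Matrix.neg_apply, adjMat, Matrix.of_apply]
    split_ifs <;> linarith [this.1]
  have h1 := le_csSup hb ⟨M, hM, hd, rfl⟩
  change _ ≤ spStar G at h1
  simp only [Matrix.neg_apply, neg_mul, Finset.sum_neg_distrib] at h1
  linarith

-- Fast density increment, with `γ = 1/200`.
theorem stmt14 :
    ∃ n₀ : ℕ, ∀ (n : ℕ), n₀ ≤ n →
      ∀ G : SimpleGraph (Fin n),
        (n : ℝ) ^ (-(1 / 200 : ℝ)) ≤ density G →
        spStar G ≤ (1 / 2) * (n : ℝ) ^ ((1 : ℝ) + 1 / 200) →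
        (∃ S : Finset (Fin n), (n : ℝ) / 8 ≤ (S.card : ℝ) ∧
            2 * density G ≤ density (G.induce (S : Set (Fin n)))) ∨
        (∃ S : Finset (Fin n), density G * (n : ℝ) ≤ (S.card : ℝ) ∧
            (10 : ℝ) ^ (-10 : ℤ) * Real.sqrt (density G) ≤
              density (G.induce (S : Set (Fin n)))) := by
  refine ⟨10 ^ 400, fun n hn G hp hsp => ?_⟩
  classical
  set a : ℝ := (n : ℝ) ^ (1 / 400 : ℝ) with hadef
  have hn0 : (0 : ℝ) ≤ n := Nat.cast_nonneg n
  have hn' : (10 : ℝ) ^ 400 ≤ n := by exact_mod_cast hn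
  have han : a ^ 400 = n := by
    rw [hadef, ← Real.rpow_natCast, ← Real.rpow_mul hn0]; norm_num
  have ha0' : 0 ≤ a := Real.rpow_nonneg hn0 _
  have ha : 10 ≤ a := by
    refine le_of_pow_le_pow_left₀ (n := 400) (by norm_num) ha0' ?_
    rw [han]; exact hn'
  have ha0 : 0 < a := by linarith
  have ha1 : 1 ≤ a := by linarith
  have hnpos : (0 : ℝ) < n := by rw [← han]; positivity
  have hpow : (n : ℝ) ^ ((1 : ℝ) + 1 / 200) = a ^ 402 := by
    rw [hadef, ← Real.rpow_natCast, ← Real.rpow_mul hn0]; norm_num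
  have hpow2 : (n : ℝ) ^ (-(1 / 200 : ℝ)) = (a ^ 2)⁻¹ := by
    rw [Real.rpow_neg hn0, hadef, ← Real.rpow_natCast, ← Real.rpow_mul hn0]; norm_num
  rw [hpow2] at hp
  rw [hpow] at hsp
  set p := density G with hpdef
  have hpa : 1 ≤ p * a ^ 2 := by
    have := mul_le_mul_of_nonneg_right hp (by positivity : 0 ≤ a ^ 2)
    rwa [inv_mul_cancel₀ (by positivity)] at this
  have hp0 : 0 < p := lt_of_lt_of_le (by positivity) hp
  have htot : ∑ i, ∑ j, adjMat G i j = p * (n : ℝ) ^ 2 := by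
    have := density_mul G
    rw [Fintype.card_fin] at this
    exact this.symm
  have h01 : ∀ i j, adjMat G i j = 0 ∨ adjMat G i j = 1 := fun i j => by
    simp only [adjMat, Matrix.of_apply]; split_ifs <;> simp
  have hA0 : ∀ i j, 0 ≤ adjMat G i j := fun i j => by rcases h01 i j with h | h <;> simp [h]
  have hs : ∀ i j, adjMat G i j = adjMat G j i := fun i j => by
    simp [adjMat, SimpleGraph.adj_comm]
  have hdiag : ∀ i, adjMat G i i = 0 := fun i => by simp [adjMat]
  have hp1 : p ≤ 1 := by
    have h1 : p * (n : ℝ) ^ 2 ≤ 1 * (n : ℝ) ^ 2 := by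
      rw [← htot]
      calc _ ≤ ∑ i : Fin n, ∑ j : Fin n, (1 : ℝ) := Finset.sum_le_sum fun i _ =>
            Finset.sum_le_sum fun j _ => by rcases h01 i j with h | h <;> simp [h]
        _ = _ := by simp [sq]
    exact le_of_mul_le_mul_right h1 (by positivity)
  obtain ⟨N, Q, hN, hQ, hAN, hQd, hQA, hNA, hNrow⟩ := neg_part (adjMat G)
    (by ext i j; simp [hs i j])
  have htr : ∑ i, N i i ≤ a ^ 402 := by
    have := spStar_use G Q hQ hQd
    rw [hQA] at this
    linarith
  have hNd : ∀ i, N i i ≤ a ^ 200 := fun i => by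
    refine le_of_pow_le_pow_left₀ (n := 2) (by norm_num) (by positivity) ?_
    calc N i i ^ 2 ≤ ∑ j, N i j ^ 2 :=
          Finset.single_le_sum (f := fun j => N i j ^ 2) (fun j _ => sq_nonneg _)
            (Finset.mem_univ i)
      _ ≤ _ := hNrow i
      _ ≤ ∑ j : Fin n, (1 : ℝ) := Finset.sum_le_sum fun j _ => by
          rcases h01 i j with h | h <;> simp [h]
      _ = n := by simp
      _ = (a ^ 200) ^ 2 := by rw [← han]; ring
  have hfr : ∑ i, ∑ j, N i j ^ 2 ≤ (a ^ 301) ^ 2 := by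
    have h1 := spStar_use G ((a ^ 200)⁻¹ • N) (hN.smul (by positivity)) (fun i => by
      simp only [Matrix.smul_apply, smul_eq_mul]
      rw [inv_mul_le_iff₀ (by positivity)]; simpa using hNd i)
    have h2 : ∑ i, ∑ j, adjMat G i j * ((a ^ 200)⁻¹ • N) i j
        = (a ^ 200)⁻¹ * ∑ i, ∑ j, adjMat G i j * N i j := by
      simp only [Finset.mul_sum, Matrix.smul_apply, smul_eq_mul]
      exact Finset.sum_congr rfl fun i _ => Finset.sum_congr rfl fun j _ => by ring
    rw [h2, hNA] at h1
    have h3 : (a ^ 200)⁻¹ * ∑ i, ∑ j, N i j ^ 2 ≤ a ^ 402 := by linarith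
    rw [inv_mul_le_iff₀ (by positivity)] at h3
    refine h3.trans (le_of_eq (by ring))
  by_contra hcon
  push Not at hcon
  obtain ⟨hc1, hc2⟩ := hcon
  have hheavy := heavy (adjMat G) hs hA0 hp0
    (by
      refine le_trans ?_ hn'
      calc (10000 : ℝ) = 10 ^ 4 := by norm_num
        _ ≤ 10 ^ 400 := pow_le_pow_right₀ (by norm_num) (by norm_num)) htot
    (fun S hS => by
      rw [← density_induce]
      exact mul_le_mul_of_nonneg_right (hc1 S hS).le (by positivity))
  obtain ⟨T, hT, hTe⟩ := core (adjMat G) N hs h01 hdiag ha han.symm hpa hp1 htot hN hAN htr hfr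
    hheavy
  set k : ℕ := max T.card ⌈p * n⌉₊ with hk
  have hpn1 : 1 ≤ p * n := by
    have : p * n = p * a ^ 2 * a ^ 398 := by rw [← han]; ring
    rw [this]
    exact one_le_mul_of_one_le_of_one_le hpa (one_le_pow₀ ha1)
  have hkn : k ≤ n := by
    refine max_le ?_ ?_
    · simpa using Finset.card_le_univ T
    · rw [Nat.ceil_le]
      nlinarith
  obtain ⟨S, hTS, hSk⟩ := Finset.exists_superset_card_eq (s := T) (n := k) (le_max_left _ _)
    (by simpa using hkn)
  have hS1 : p * n ≤ S.card := by
    rw [hSk]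
    have h1 : p * n ≤ (⌈p * n⌉₊ : ℝ) := Nat.le_ceil _
    refine h1.trans ?_
    exact_mod_cast le_max_right _ _
  have hS2 : (S.card : ℝ) ≤ 64 * p * n := by
    rw [hSk, hk, Nat.cast_max]
    refine max_le hT ?_
    have : (⌈p * n⌉₊ : ℝ) < p * n + 1 := Nat.ceil_lt_add_one (by positivity)
    linarith
  have h3 := hc2 S hS1
  have h4 := density_induce G S
  have h5 : ∑ i ∈ T, ∑ j ∈ T, adjMat G i j ≤ ∑ i ∈ S, ∑ j ∈ S, adjMat G i j := by
    calc _ ≤ ∑ u ∈ T, ∑ j ∈ S, adjMat G u j := Finset.sum_le_sum fun u _ =>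
            Finset.sum_le_sum_of_subset_of_nonneg hTS fun j _ _ => hA0 u j
      _ ≤ _ := Finset.sum_le_sum_of_subset_of_nonneg hTS
            fun i _ _ => Finset.sum_nonneg fun j _ => hA0 i j
  rw [← h4] at h5
  have h6 : density (G.induce (S : Set (Fin n))) * (S.card : ℝ) ^ 2
      ≤ (10 : ℝ) ^ (-10 : ℤ) * √p * (64 * p * n) ^ 2 := by
    refine mul_le_mul h3.le (pow_le_pow_left₀ (by positivity) hS2 2) (by positivity) (by positivity)
  have h7 : (10 : ℝ) ^ (-10 : ℤ) * √p * (64 * p * n) ^ 2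
      = 4096 / 10 ^ 10 * (p ^ 2 * √p * (n : ℝ) ^ 2) := by
    rw [zpow_neg]; norm_num; ring
  have h8 : 0 < p ^ 2 * √p * (n : ℝ) ^ 2 := by
    have := Real.sqrt_pos.2 hp0
    positivity
  rw [h7] at h6
  have h9 := hTe.trans (h5.trans h6)
  norm_num at h9
  linarith
end
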